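/- arXiv:2404.02005 — 2 statements merged into one kernel-verified Lean document; each statement's English description precedes it below -/
import Mathlib

section
/- Let (R, m) be an analytically unramified Noetherian local ring satisfying Serre's condition (S2), i.e. depth(R_p) ≥ min{2, height(p)} for every prime ideal p. Then the integral closure R̄ of R in its total ring of fractions is a reflexive R-module, i.e. the natural biduality map R̄ → Hom_R(Hom_R(R̄, R), R) is an isomorphism. -/
open CategoryTheory IsLocalRing

set_option synthInstance.maxHeartbeats 1000000
set_option maxHeartbeats 1000000

noncomputable section

/-- The integral closure `R̄` of `R` in its total ring of fractions, viewed as a type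
(with its canonical `R`-algebra and `R`-module structures). -/
abbrev IntClosure (R : Type) [CommRing R] : Type :=
  ↥(integralClosure R (FractionRing R))

/-- The quotient `R`-module `R̄/R`. -/
abbrev IntClosureQuot (R : Type) [CommRing R] : Type :=
  IntClosure R ⧸ LinearMap.range (Algebra.linearMap R (IntClosure R))

/-- The conductor ideal `𝔠 = Ann_R(R̄/R) = {r : R | r • R̄ ⊆ R}`. -/
def conductorIdeal (R : Type) [CommRing R] : Ideal R :=
  Module.annihilator R (IntClosureQuot R)

/-- A local ring `R` is analytically unramified if its `m`-adic completion is reduced. -/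
def AnalyticallyUnramified (R : Type) [CommRing R] [IsLocalRing R] : Prop :=
  IsReduced (AdicCompletion (maximalIdeal R) R)

/-- `R` is normal: it is reduced and equal to its integral closure `R̄` in its total
ring of fractions. -/
def IsNormalRing (R : Type) [CommRing R] : Prop :=
  IsReduced R ∧ integralClosure R (FractionRing R) = ⊥

/-- `Ext^i_R(M, N)` as a type. -/
abbrev ExtMod (R : Type) [CommRing R] (M : Type) [AddCommGroup M] [Module R M]
    (N : Type) [AddCommGroup N] [Module R N] (i : ℕ) : Type :=
  ↥(((Ext R (ModuleCat.{0} R) i).obj (Opposite.op (ModuleCat.of R M))).obj (ModuleCat.of R N))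

/-- `M` has finite projective dimension over `R`:
`Ext^i_R(M, -)` vanishes for all `i` bigger than some `n`. -/
def HasFiniteProjDim (R : Type) [CommRing R] (M : Type) [AddCommGroup M] [Module R M] : Prop :=
  ∃ n : ℕ, ∀ (N : ModuleCat.{0} R) (i : ℕ), n < i →
    Subsingleton ↥(((Ext R (ModuleCat.{0} R) i).obj (Opposite.op (ModuleCat.of R M))).obj N)

/-- `M` has finite injective dimension over `R`:
`Ext^i_R(-, M)` vanishes for all `i` bigger than some `n`. -/
def HasFiniteInjDim (R : Type) [CommRing R] (M : Type) [AddCommGroup M] [Module R M] : Prop :=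
  ∃ n : ℕ, ∀ (N : ModuleCat.{0} R) (i : ℕ), n < i →
    Subsingleton ↥(((Ext R (ModuleCat.{0} R) i).obj (Opposite.op N)).obj (ModuleCat.of R M))

/-- The depth of an `R`-module `M` over a local ring `(R, m)`: the least `i` such that
`Ext^i_R(R/m, M) ≠ 0` (`⊤` if there is no such `i`), valued in `WithBot (WithTop ℕ)`
for easy comparison with `ringKrullDim`. -/
def moduleDepth (R : Type) [CommRing R] [IsLocalRing R]
    (M : Type) [AddCommGroup M] [Module R M] : WithBot (WithTop ℕ) :=
  sInf { n : WithBot (WithTop ℕ) |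
    ∃ i : ℕ, n = (i : ℕ) ∧ Nontrivial (ExtMod R (ResidueField R) M i) }

/-- A Noetherian local ring is Gorenstein if it has finite injective dimension
as a module over itself. -/
def IsGorensteinLocal (R : Type) [CommRing R] [IsLocalRing R] : Prop :=
  IsNoetherianRing R ∧ HasFiniteInjDim R R

/-- A Noetherian local ring is Cohen–Macaulay if its depth equals its Krull dimension. -/
def IsCohenMacaulayLocal (R : Type) [CommRing R] [IsLocalRing R] : Prop :=
  IsNoetherianRing R ∧ moduleDepth R R = ringKrullDim R

/-- A ring is Cohen–Macaulay if it is Noetherian and all its localizations at primes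
are Cohen–Macaulay local rings. -/
def IsCohenMacaulayRing (A : Type) [CommRing A] : Prop :=
  IsNoetherianRing A ∧ ∀ (p : Ideal A) [p.IsPrime],
    moduleDepth (Localization.AtPrime p) (Localization.AtPrime p) =
      ringKrullDim (Localization.AtPrime p)

/-- Serre's condition `(S2)`: `depth (R_p) ≥ min {2, height p}` for every prime `p`
(`height p` being the dimension of `R_p`). -/
def SerreS2 (R : Type) [CommRing R] : Prop :=
  ∀ (p : Ideal R) [p.IsPrime],
    min 2 (ringKrullDim (Localization.AtPrime p)) ≤
      moduleDepth (Localization.AtPrime p) (Localization.AtPrime p)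

/-- A Noetherian local ring is regular if its maximal ideal can be generated by
`dim R` elements. -/
def IsRegularLocal (A : Type) [CommRing A] [IsLocalRing A] : Prop :=
  IsNoetherianRing A ∧ ∃ s : Finset A, Ideal.span (s : Set A) = maximalIdeal A ∧
    (s.card : WithBot (WithTop ℕ)) = ringKrullDim A

/-- Serre's condition `(R1)`: `R_p` is regular for every prime `p` of height at most `1`. -/
def SerreR1 (R : Type) [CommRing R] : Prop :=
  ∀ (p : Ideal R) [p.IsPrime], ringKrullDim (Localization.AtPrime p) ≤ 1 →
    IsRegularLocal (Localization.AtPrime p)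

/-- The `i`-th local cohomology `H^i_m(M)` of `M` with support in the maximal ideal,
as a type. -/
abbrev localCohMod (R : Type) [CommRing R] [IsLocalRing R] (i : ℕ)
    (M : Type) [AddCommGroup M] [Module R M] : Type :=
  ↥((localCohomology (maximalIdeal R) i).obj (ModuleCat.of R M))

/-- `x : Fin d → R` is a system of parameters for the local ring `(R, m)`:
`d = dim R`, all `x i` lie in `m`, and the ideal they generate is `m`-primary
(its radical is `m`). -/
def IsSystemOfParameters (R : Type) [CommRing R] [IsLocalRing R] {d : ℕ}
    (x : Fin d → R) : Prop :=
  (d : WithBot (WithTop ℕ)) = ringKrullDim R ∧ (∀ i, x i ∈ maximalIdeal R) ∧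
    (Ideal.span (Set.range x)).radical = maximalIdeal R

/-- `E` is an injective hull of the residue field of the local ring `R`:
`E` is injective and contains a copy of `R/m` as an essential submodule. -/
def IsInjectiveHullOfResidueField (R : Type) [CommRing R] [IsLocalRing R]
    (E : Type) [AddCommGroup E] [Module R E] : Prop :=
  Module.Injective R E ∧ ∃ f : ResidueField R →ₗ[R] E, Function.Injective f ∧
    ∀ N : Submodule R E, N ≠ ⊥ → N ⊓ LinearMap.range f ≠ ⊥

set_option linter.all false
set_option linter.style.haveILetI false
set_option linter.unusedVariables false

theorem sv_exists_evalHom {C A : Type} [CommRing C] [CommRing A] (I : Ideal A) [IsAdicComplete I A]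
    (φ : C →+* A) {n : ℕ} (x : Fin n → A) (hx : ∀ i, x i ∈ I) :
    ∃ f : MvPowerSeries (Fin n) C →+* A, (∀ c, f (MvPowerSeries.C c) = φ c) ∧
      ∀ i, f (MvPowerSeries.X i) = x i := by
  letI : WithIdeal A := ⟨I⟩
  letI : UniformSpace C := ⊥
  haveI : DiscreteUniformity C := ⟨rfl⟩
  haveI : DiscreteTopology C := inferInstance
  have hI : IsAdic I := rfl
  obtain ⟨h1, h2⟩ := hI.isAdicComplete_iff.mp inferInstance
  haveI : IsLinearTopology A A := inferInstance
  haveI : IsUniformAddGroup C := inferInstance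
  have hφ : Continuous φ := continuous_of_discreteTopology
  have ha : MvPowerSeries.HasEval x := by
    refine ⟨fun s => ?_, by simp [Filter.cofinite_eq_bot]⟩
    rw [IsTopologicallyNilpotent, hI.hasBasis_nhds_zero.tendsto_right_iff]
    intro i _
    filter_upwards [Filter.eventually_ge_atTop i] with n hn
    exact Ideal.pow_le_pow_right hn (Ideal.pow_mem_pow (hx s) n)
  refine ⟨MvPowerSeries.eval₂Hom hφ ha, fun c => ?_, fun i => ?_⟩
  · rw [MvPowerSeries.coe_eval₂Hom, MvPowerSeries.eval₂_C]
  · rw [MvPowerSeries.coe_eval₂Hom, MvPowerSeries.eval₂_X]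

theorem sv_smul_top_pi {S : Type} [CommRing S] (I : Ideal S) (hI : I.FG) (n k : ℕ) (g : Fin k → S)
    (hg : ∀ i, g i ∈ I ^ n) : g ∈ (I ^ n • ⊤ : Submodule S (Fin k → S)) := by
  have : g = ∑ i, g i • (Pi.single i 1 : Fin k → S) := by
    ext j; simp [Finset.sum_apply, Pi.single_apply]
  rw [this]
  exact Submodule.sum_mem _ fun i _ => Submodule.smul_mem_smul (hg i) trivial

theorem sv_finite_of_complete {S M : Type} [CommRing S] [AddCommGroup M] [Module S M] (I : Ideal S)
    (hfg : I.FG) [IsPrecomplete I S] [IsHausdorff I M] (N : Submodule S M) (hN : N.FG)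
    (h : N ⊔ I • ⊤ = ⊤) : Module.Finite S M := by
  obtain ⟨k, v, hv⟩ := Submodule.fg_iff_exists_fin_generating_family.mp hN
  have hpre : IsPrecomplete I (Fin k → S) := by
    refine ⟨fun f hf => ?_⟩
    have : ∀ i, ∃ L : S, ∀ n, f n i ≡ L [SMOD (I ^ n • ⊤ : Submodule S S)] := fun i => by
      refine IsPrecomplete.prec' (fun n => f n i) fun {m n} hmn => ?_
      have := (hf hmn).map (LinearMap.proj i : (Fin k → S) →ₗ[S] S)
      refine SModEq.mono ?_ this
      rw [Submodule.map_smul'']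
      exact Submodule.smul_mono le_rfl le_top
    choose L hL using this
    refine ⟨L, fun n => ?_⟩
    rw [SModEq.sub_mem]
    refine sv_smul_top_pi I hfg n k _ fun i => ?_
    have := SModEq.sub_mem.mp (hL i n)
    simpa using this
  let F : (Fin k → S) →ₗ[S] M := Fintype.linearCombination S v
  have hF : LinearMap.range F = N := by
    rw [Fintype.range_linearCombination, hv]
  refine Module.Finite.of_surjective F ?_
  refine surjective_of_mkQ_comp_surjective (I := I) ?_
  rw [← LinearMap.range_eq_top, LinearMap.range_comp, hF]
  rw [eq_top_iff, ← Submodule.map_le_map_iff_of_injective (f := LinearMap.id) Function.injective_id]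
  rintro x -
  obtain ⟨y, rfl⟩ := Submodule.mkQ_surjective _ x
  have : y ∈ (N ⊔ I • ⊤ : Submodule S M) := by rw [h]; exact Submodule.mem_top
  obtain ⟨a, ha, b, hb, rfl⟩ := Submodule.mem_sup.mp this
  simp only [Submodule.map_id, map_add]
  refine Submodule.add_mem _ ⟨a, ha, rfl⟩ ?_
  rw [(Submodule.Quotient.mk_eq_zero _).mpr hb |> (fun h => (h : Submodule.mkQ (I • ⊤) b = 0))]
  exact zero_mem _

/-- completion of a Noetherian local ring is Noetherian -/
theorem sv_completion_noeth (R : Type) [CommRing R] [IsLocalRing R] [IsNoetherianRing R] :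
    IsNoetherianRing (AdicCompletion (maximalIdeal R) R) := by
  let A := AdicCompletion (maximalIdeal R) R
  obtain ⟨k, v, hv⟩ := Submodule.fg_iff_exists_fin_generating_family.mp
    (maximalIdeal R).fg_of_isNoetherianRing
  have hmem : ∀ i, algebraMap R A (v i) ∈ maximalIdeal A := fun i => by
    rw [AdicCompletion.maximalIdeal_eq_map]
    exact Ideal.mem_map_of_mem _ (hv ▸ Submodule.subset_span ⟨i, rfl⟩)
  obtain ⟨f, hC, hX⟩ := sv_exists_evalHom (maximalIdeal A) (algebraMap R A)
    (fun i => algebraMap R A (v i)) hmem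
  have hmap : Ideal.map f (Ideal.span (Set.range MvPowerSeries.X)) = maximalIdeal A := by
    have h3 := congrArg (Ideal.map (algebraMap R A)) (hv : Ideal.span (Set.range v) = maximalIdeal R)
    rw [Ideal.map_span] at h3
    rw [AdicCompletion.maximalIdeal_eq_map, Ideal.map_span]
    refine Eq.trans ?_ h3
    rw [← Set.range_comp, ← Set.range_comp]
    congr 2
    ext1 i
    exact hX i
  have hs : Function.Surjective f := by
    haveI : IsHausdorff (Ideal.map f (Ideal.span (Set.range MvPowerSeries.X))) A := by
      rw [hmap]; infer_instance
    refine surjective_of_mk_map_comp_surjective (I := Ideal.span (Set.range MvPowerSeries.X)) f ?_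
    intro y
    obtain ⟨y, rfl⟩ := Ideal.Quotient.mk_surjective y
    obtain ⟨z, hz⟩ := (AdicCompletion.residueField_map_bijective R).2 (residue A y)
    obtain ⟨r, rfl⟩ := residue_surjective z
    refine ⟨MvPowerSeries.C r, ?_⟩
    rw [RingHom.comp_apply, hC, Ideal.Quotient.eq, hmap]
    rw [ResidueField.map_residue] at hz
    rwa [← Ideal.Quotient.eq]
  exact isNoetherianRing_of_surjective _ _ f hs

theorem sv_almost_lowest {D K : Type} [CommRing D] [IsDomain D] [Field K] [Algebra D K]
    [IsFractionRing D K] {q : PowerSeries K} (hq : IsAlmostIntegral (PowerSeries D) q) {N : ℕ}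
    (hN : PowerSeries.X ^ N ∣ q) : IsAlmostIntegral D (PowerSeries.coeff N q) := by
  obtain ⟨q', rfl⟩ := hN
  obtain ⟨h, hh, hr⟩ := hq
  have hh0 : h ≠ 0 := nonZeroDivisors.ne_zero hh
  refine ⟨PowerSeries.coeff h.order.toNat h,
    mem_nonZeroDivisors_of_ne_zero (PowerSeries.coeff_order hh0), fun n => ?_⟩
  obtain ⟨r, hr⟩ := hr n
  obtain ⟨h', hh'⟩ : PowerSeries.X ^ h.order.toNat ∣ h := PowerSeries.X_pow_order_dvd
  generalize h.order.toNat = e at hh' ⊢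
  subst hh'
  refine ⟨PowerSeries.coeff (e + N * n) r, ?_⟩
  have h1 := congrArg (PowerSeries.coeff (e + N * n)) hr
  rw [PowerSeries.algebraMap_apply'', PowerSeries.coeff_map] at h1
  rw [h1, Algebra.smul_def, PowerSeries.algebraMap_apply'', map_mul (PowerSeries.map _),
    map_pow (PowerSeries.map _), PowerSeries.map_X]
  have : (PowerSeries.X ^ e * (PowerSeries.map (algebraMap D K)) h' * (PowerSeries.X ^ N * q') ^ n)
    = PowerSeries.X ^ (e + N * n) * ((PowerSeries.map (algebraMap D K)) h' * q' ^ n) := by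
    rw [mul_pow, pow_add, pow_mul]; ring
  rw [this]
  have c1 : ∀ (S : Type) [CommRing S] (k : ℕ) (u : PowerSeries S),
    PowerSeries.coeff k (PowerSeries.X ^ k * u) = PowerSeries.constantCoeff u := by
    intro S _ k u
    simpa using PowerSeries.coeff_X_pow_mul u k 0
  rw [c1, c1, c1, Algebra.smul_def]
  simp only [map_mul, map_pow]
  congr 1

theorem sv_almost_range {D K : Type} [CommRing D] [IsDomain D] [IsNoetherianRing D]
    [IsIntegrallyClosed D] [Field K] [Algebra D K]
    [IsFractionRing D K] {q : PowerSeries K} (hq : IsAlmostIntegral (PowerSeries D) q) :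
    ∃ d : PowerSeries D, algebraMap _ _ d = q := by
  have key : ∀ N, ∃ d : PowerSeries D, PowerSeries.X ^ N ∣ q - algebraMap _ _ d := by
    intro N
    induction N with
    | zero => exact ⟨0, by simp⟩
    | succ N ih =>
      obtain ⟨d, hd⟩ := ih
      have h1 : IsAlmostIntegral (PowerSeries D) (q - algebraMap _ _ d) := by
        rw [← mem_completeIntegralClosure]
        exact sub_mem hq (algebraMap_mem _ _)
      have h2 := (sv_almost_lowest h1 hd).isIntegral
      obtain ⟨c, hc⟩ := IsIntegrallyClosed.isIntegral_iff.mp h2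
      refine ⟨d + PowerSeries.C c * PowerSeries.X ^ N, ?_⟩
      rw [PowerSeries.X_pow_dvd_iff] at hd ⊢
      intro m hm
      rw [map_add (algebraMap (PowerSeries D) (PowerSeries K)), ← sub_sub, map_sub]
      rcases (Nat.lt_succ_iff_lt_or_eq.mp hm) with h | rfl
      · rw [hd m h, PowerSeries.algebraMap_apply'', PowerSeries.coeff_map, PowerSeries.coeff_C_mul,
          PowerSeries.coeff_X_pow]
        simp [h.ne]
      · rw [PowerSeries.algebraMap_apply'' (A := K) (f := PowerSeries.C c * PowerSeries.X ^ m),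
          PowerSeries.coeff_map, PowerSeries.coeff_C_mul,
          PowerSeries.coeff_X_pow, ← hc]
        simp
  have h3 : ∀ n, ∃ c : D, algebraMap D K c = PowerSeries.coeff n q := by
    intro n
    obtain ⟨d, hd⟩ := key (n+1)
    rw [PowerSeries.X_pow_dvd_iff] at hd
    have := hd n (Nat.lt_succ_self n)
    rw [map_sub, sub_eq_zero, PowerSeries.algebraMap_apply'', PowerSeries.coeff_map] at this
    exact ⟨_, this.symm⟩
  choose c hc using h3
  refine ⟨PowerSeries.mk c, ?_⟩
  ext n
  rw [PowerSeries.algebraMap_apply'', PowerSeries.coeff_map, PowerSeries.coeff_mk, hc]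

theorem sv_powerSeries_normal (D : Type) [CommRing D] [IsDomain D] [IsNoetherianRing D]
    [IsIntegrallyClosed D] : IsIntegrallyClosed (PowerSeries D) := by
  let K := FractionRing D
  let Q := FractionRing (PowerSeries D)
  let L := FractionRing (PowerSeries K)
  haveI : IsScalarTower (PowerSeries D) (PowerSeries K) L := inferInstance
  have hinj0 : Function.Injective (algebraMap (PowerSeries D) (PowerSeries K)) := by
    intro a b hab
    ext n
    have := congrArg (PowerSeries.coeff n) hab
    simp only [PowerSeries.algebraMap_apply'', PowerSeries.coeff_map] at this
    exact IsFractionRing.injective D K this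
  have hinj : Function.Injective (algebraMap (PowerSeries D) L) :=
    (IsFractionRing.injective (PowerSeries K) L).comp hinj0
  let φ : Q →ₐ[PowerSeries D] L := IsFractionRing.liftAlgHom (g := Algebra.ofId (PowerSeries D) L) hinj
  rw [isIntegrallyClosed_iff Q]
  intro z hz
  have h1 : IsIntegral (PowerSeries D) (φ z) := hz.map φ
  have h2 : IsIntegral (PowerSeries K) (φ z) := h1.tower_top
  obtain ⟨q, hq⟩ := IsIntegrallyClosed.isIntegral_iff.mp h2
  rw [← hq, isIntegral_algebraMap_iff (IsFractionRing.injective (PowerSeries K) L)] at h1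
  obtain ⟨f, g, hg, rfl⟩ := IsFractionRing.div_surjective (A := PowerSeries D) z
  have hgq : algebraMap (PowerSeries D) (PowerSeries K) g * q = algebraMap _ _ f := by
    apply IsFractionRing.injective (PowerSeries K) L
    rw [map_mul, hq, map_div₀, AlgHom.commutes, AlgHom.commutes, ← IsScalarTower.algebraMap_apply,
      ← IsScalarTower.algebraMap_apply]
    refine mul_div_cancel₀ _ ?_
    rw [Ne, map_eq_zero_iff _ hinj]
    exact nonZeroDivisors.ne_zero hg
  have h3 := h1.isAlmostIntegral_of_exists_smul_mem_range
    ⟨g, hg, f, by rw [Algebra.smul_def, hgq]⟩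
  obtain ⟨d, rfl⟩ := sv_almost_range h3
  refine ⟨d, ?_⟩
  apply φ.toRingHom.injective
  change φ _ = φ _
  rw [← hq, AlgHom.commutes, ← IsScalarTower.algebraMap_apply]

theorem sv_mvPowerSeries_domain (D : Type) [CommRing D] [IsDomain D] (n : ℕ) :
    IsDomain (MvPowerSeries (Fin n) D) := NoZeroDivisors.to_isDomain _

theorem sv_mvPowerSeries_normal (D : Type) [CommRing D] [IsDomain D] [IsNoetherianRing D]
    [IsIntegrallyClosed D] (n : ℕ) : IsIntegrallyClosed (MvPowerSeries (Fin n) D) := by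
  induction n with
  | zero => exact IsIntegrallyClosed.of_equiv (MvPowerSeries.isEmptyEquiv (Fin 0) D).symm.toRingEquiv
  | succ n ih =>
    haveI := sv_mvPowerSeries_domain D n
    haveI := sv_powerSeries_normal (MvPowerSeries (Fin n) D)
    exact IsIntegrallyClosed.of_equiv (MvPowerSeries.finSuccEquiv D n).symm.toRingEquiv

/-- finiteness of integral closures in finite extensions (N-2) -/
def SvN2 (D : Type) [CommRing D] : Prop :=
  ∀ (K L : Type) [Field K] [Field L] [Algebra D K] [IsFractionRing D K] [Algebra K L] [Algebra D L]
    [IsScalarTower D K L] [FiniteDimensional K L], Module.Finite D (integralClosure D L)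

theorem sv_fg_of_bound {D K0 Ω : Type} [CommRing D] [IsDomain D] [IsNoetherianRing D]
    (h2 : SvN2 D) [Field K0] [Algebra D K0] [IsFractionRing D K0] [Field Ω] [Algebra K0 Ω]
    [Algebra D Ω] [IsScalarTower D K0 Ω] (M : Submodule D Ω) (hint : ∀ z ∈ M, IsIntegral D z)
    (r : ℕ) (hr : ∀ (k : ℕ) (z : Fin k → Ω), (∀ i, z i ∈ M) → LinearIndependent K0 z → k ≤ r) :
    M.FG := by
  obtain ⟨b, hbM, hspan, hli⟩ := exists_linearIndependent K0 (M : Set Ω)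
  have hfin : b.Finite := by
    by_contra hinf
    have hinf : b.Infinite := hinf
    obtain ⟨t, ht, htc⟩ := hinf.exists_subset_card_eq (r + 1)
    have e : Fin (r + 1) ≃ t := (t.equivFinOfCardEq htc).symm
    have := hr (r + 1) (fun i => (e i : Ω)) (fun i => hbM (ht (e i).2)) (by
      have h1 : LinearIndependent K0 (fun x : t => (x : Ω)) := hli.comp (fun x : t => (⟨x, ht x.2⟩ : b))
        (fun x y h => Subtype.ext (congrArg (fun w : b => (w : Ω)) h))
      exact h1.comp e e.injective)
    omega
  let E := IntermediateField.adjoin K0 b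
  haveI : Finite b := hfin
  haveI : FiniteDimensional K0 E := IntermediateField.finiteDimensional_adjoin
    (fun x hx => (hint x (hbM hx)).tower_top)
  haveI : Module.Finite D (integralClosure D E) := h2 K0 E
  have hME : ∀ z ∈ M, z ∈ E := by
    intro z hz
    have h1 : z ∈ Submodule.span K0 b := hspan ▸ Submodule.subset_span hz
    have h2 : Submodule.span K0 b ≤ E.toSubalgebra.toSubmodule :=
      Submodule.span_le.mpr (IntermediateField.subset_adjoin K0 b)
    exact h2 h1
  have hMi : ∀ z (hz : z ∈ M), IsIntegral D (⟨z, hME z hz⟩ : E) := by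
    intro z hz
    have hzi := hint z hz
    have h3 : Function.Injective (algebraMap E Ω) := (algebraMap E Ω).injective
    haveI : IsScalarTower D E Ω := IsScalarTower.of_algebraMap_eq fun _ => rfl
    exact (isIntegral_algebraMap_iff h3 (x := (⟨z, hME z hz⟩ : E))).mp hzi
  let f : M →ₗ[D] integralClosure D E :=
    { toFun := fun z => ⟨⟨z, hME z z.2⟩, hMi z z.2⟩
      map_add' := fun _ _ => rfl
      map_smul' := fun c z => by
        apply Subtype.ext
        apply Subtype.ext
        rfl }
  have hf : Function.Injective f := by
    intro a b h
    have := congrArg (fun t : integralClosure D E => ((t : E) : Ω)) h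
    exact Subtype.ext this
  exact Module.Finite.iff_fg.mp (Module.Finite.of_injective f hf)

theorem sv_tate_step {D : Type} [CommRing D] [IsDomain D] [IsNoetherianRing D]
    [IsIntegrallyClosed D] (p : ℕ) [Fact p.Prime] [CharP D p] (h2 : SvN2 D)
    {K L : Type} [Field K] [Field L] [Algebra (PowerSeries D) K] [IsFractionRing (PowerSeries D) K]
    [Algebra K L] [Algebra (PowerSeries D) L] [IsScalarTower (PowerSeries D) K L]
    [FiniteDimensional K L] (e : ℕ) (he : ∀ l : L, ∃ k : K, algebraMap K L k = l ^ p ^ e) :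
    Module.Finite (PowerSeries D) (integralClosure (PowerSeries D) L) := by
  haveI := sv_powerSeries_normal D
  have hinj : Function.Injective (algebraMap (PowerSeries D) L) := by
    rw [IsScalarTower.algebraMap_eq (PowerSeries D) K L]
    exact (algebraMap K L).injective.comp (IsFractionRing.injective _ K)
  haveI : CharP L p := charP_of_injective_ringHom
    (f := (algebraMap (PowerSeries D) L).comp PowerSeries.C) (hinj.comp PowerSeries.C_injective) p
  let Ω := AlgebraicClosure (FractionRing D)
  have hinjΩ : Function.Injective (algebraMap D Ω) := by
    rw [IsScalarTower.algebraMap_eq D (FractionRing D) Ω]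
    exact (algebraMap (FractionRing D) Ω).injective.comp (IsFractionRing.injective D _)
  haveI : CharP Ω p := charP_of_injective_ringHom
    (f := (algebraMap D Ω)) hinjΩ p
  have hq0 : 0 < p ^ e := pow_pos (Fact.out : p.Prime).pos e
  have hpw : ∀ b : integralClosure (PowerSeries D) L, ∃ a : PowerSeries D,
      algebraMap (PowerSeries D) L a = (b : L) ^ p ^ e := by
    intro b
    obtain ⟨k, hk⟩ := he b
    have h1 : IsIntegral (PowerSeries D) ((b : L) ^ p ^ e) := b.2.pow _
    rw [← hk, isIntegral_algebraMap_iff (algebraMap K L).injective] at h1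
    obtain ⟨a, ha⟩ := IsIntegrallyClosed.isIntegral_iff.mp h1
    exact ⟨a, by rw [IsScalarTower.algebraMap_apply (PowerSeries D) K L, ha, hk]⟩
  choose pw hpw using hpw
  have pw_add : ∀ a b, pw (a + b) = pw a + pw b := fun a b => hinj (by
    rw [map_add, hpw, hpw, hpw]; push_cast; exact add_pow_char_pow _ _ _ _)
  have pw_smul : ∀ (c : PowerSeries D) b, pw (c • b) = c ^ p ^ e * pw b := fun a b => hinj (by
    rw [map_mul, hpw, hpw, map_pow, ← mul_pow, ← Algebra.smul_def]; rfl)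
  have pw_zero : pw 0 = 0 := hinj (by rw [hpw, ZeroMemClass.coe_zero, zero_pow hq0.ne', map_zero])
  have pw_sub : ∀ a b, pw (a - b) = pw a - pw b := fun a b => by
    rw [eq_sub_iff_add_eq, ← pw_add, sub_add_cancel]
  have cf : ∀ (c a : PowerSeries D) (n : ℕ), PowerSeries.X ^ n ∣ a →
      PowerSeries.coeff n (c ^ p ^ e * a) =
        (PowerSeries.constantCoeff c) ^ p ^ e * PowerSeries.coeff n a := by
    rintro c _ n ⟨a, rfl⟩
    have c1 : ∀ (u : PowerSeries D),
      PowerSeries.coeff n (PowerSeries.X ^ n * u) = PowerSeries.constantCoeff u := by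
      intro u
      simpa using PowerSeries.coeff_X_pow_mul u n 0
    rw [mul_left_comm, c1, c1, map_mul, map_pow]
  let F : ℕ → Submodule (PowerSeries D) (integralClosure (PowerSeries D) L) := fun n =>
    { carrier := {b | PowerSeries.X ^ n ∣ pw b}
      zero_mem' := by simp [pw_zero]
      add_mem' := by
        intro a b ha hb
        change _ ∣ pw _
        rw [pw_add]; exact dvd_add ha hb
      smul_mem' := by
        intro c b hb
        change _ ∣ pw _
        rw [pw_smul]; exact dvd_mul_of_dvd_right hb _ }
  have memF : ∀ n b, b ∈ F n ↔ PowerSeries.X ^ n ∣ pw b := fun n b => Iff.rfl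
  have key : ∀ n, ∃ N : Submodule (PowerSeries D) (integralClosure (PowerSeries D) L), N.FG ∧
      F n ≤ N ⊔ F (n + 1) := by
    intro n
    let M : Submodule D Ω :=
      { carrier := {z | ∃ b, b ∈ F n ∧ z ^ p ^ e = algebraMap D Ω (PowerSeries.coeff n (pw b))}
        zero_mem' := ⟨0, zero_mem _, by rw [pw_zero, map_zero, map_zero, zero_pow hq0.ne']⟩
        add_mem' := by
          rintro z w ⟨b, hb, hz⟩ ⟨c, hc, hw⟩
          exact ⟨b + c, add_mem hb hc, by rw [add_pow_char_pow, hz, hw, pw_add, map_add, map_add]⟩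
        smul_mem' := by
          rintro d z ⟨b, hb, hz⟩
          refine ⟨(PowerSeries.C d) • b, Submodule.smul_mem _ _ hb, ?_⟩
          rw [Algebra.smul_def, mul_pow, hz, pw_smul, cf _ _ _ hb, map_mul, map_pow,
            PowerSeries.constantCoeff_C] }
    have hMfg : M.FG := by
      refine sv_fg_of_bound (K0 := FractionRing D) h2 M ?_ (Module.finrank K L) ?_
      · rintro z ⟨b, hb, hz⟩
        refine IsIntegral.of_pow hq0 ?_
        rw [hz]; exact isIntegral_algebraMap
      · intro k z hz hli
        choose b hb hzb using hz
        rw [← LinearIndependent.iff_fractionRing D] at hli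
        have hli2 : LinearIndependent (PowerSeries D) (fun i => (b i : L)) := by
          have main : ∀ (m : ℕ) (a : Fin k → PowerSeries D), ∑ i, a i • (b i : L) = 0 →
              ∀ i, PowerSeries.X ^ m ∣ a i := by
            intro m
            induction m with
            | zero => intro a _ i; simp
            | succ m ih =>
              intro a ha i
              choose a' ha' using ih a ha
              have h3 : ∑ i, a' i • (b i) = 0 := by
                apply Subtype.ext
                have hX : algebraMap (PowerSeries D) L (PowerSeries.X ^ m) ≠ 0 := by
                  rw [Ne, map_eq_zero_iff _ hinj]
                  exact pow_ne_zero _ PowerSeries.X_ne_zero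
                apply mul_left_cancel₀ hX
                rw [← Algebra.smul_def]
                simp only [AddSubmonoidClass.coe_finset_sum, Subalgebra.coe_smul,
                  ZeroMemClass.coe_zero, mul_zero, Finset.smul_sum, smul_smul, ← ha']
                exact ha
              have h4 : ∑ i, PowerSeries.constantCoeff (a' i) • z i = 0 := by
                have h5 : PowerSeries.coeff n (pw (∑ i, a' i • (b i))) = 0 := by
                  rw [h3, pw_zero, map_zero]
                let pwh : integralClosure (PowerSeries D) L →+ PowerSeries D :=
                  ⟨⟨pw, pw_zero⟩, pw_add⟩
                change PowerSeries.coeff n (pwh (∑ i, a' i • (b i))) = 0 at h5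
                rw [map_sum, map_sum] at h5
                have h6 : ∀ i, PowerSeries.coeff n (pwh (a' i • b i)) =
                    (PowerSeries.constantCoeff (a' i)) ^ p ^ e * PowerSeries.coeff n (pw (b i)) := by
                  intro i
                  change PowerSeries.coeff n (pw (a' i • b i)) = _
                  rw [pw_smul, cf _ _ _ (hb i)]
                simp only [h6] at h5
                have h7 := congrArg (algebraMap D Ω) h5
                rw [map_sum, map_zero] at h7
                rw [← pow_eq_zero_iff hq0.ne', sum_pow_char_pow, ← h7]
                refine Finset.sum_congr rfl fun i _ => ?_
                rw [Algebra.smul_def, mul_pow, hzb, map_mul, map_pow]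
              have h8 := Fintype.linearIndependent_iff.mp hli _ h4 i
              rw [ha' i, pow_succ]
              exact mul_dvd_mul_left _ (PowerSeries.X_dvd_iff.mpr h8)
          rw [Fintype.linearIndependent_iff]
          intro a ha i
          ext m
          have := main (m + 1) a ha i
          rw [PowerSeries.X_pow_dvd_iff] at this
          simpa using this m (Nat.lt_succ_self m)
        rw [LinearIndependent.iff_fractionRing (PowerSeries D) K] at hli2
        simpa using hli2.fintype_card_le_finrank
    obtain ⟨k, z, hz⟩ := Submodule.fg_iff_exists_fin_generating_family.mp hMfg
    have hzM : ∀ i, z i ∈ M := fun i => hz ▸ Submodule.subset_span ⟨i, rfl⟩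
    choose b hb hzb using hzM
    refine ⟨Submodule.span _ (Set.range b), Submodule.fg_span (Set.finite_range b), ?_⟩
    intro x hx
    obtain ⟨w, hw⟩ := IsAlgClosed.exists_pow_nat_eq
      (algebraMap D Ω (PowerSeries.coeff n (pw x))) hq0
    have hwM : w ∈ M := ⟨x, hx, hw⟩
    rw [← hz, Submodule.mem_span_range_iff_exists_fun] at hwM
    obtain ⟨c, hc⟩ := hwM
    set y := ∑ i, PowerSeries.C (c i) • b i with hy
    have hyF : y ∈ F n := Submodule.sum_mem _ fun i _ => Submodule.smul_mem _ _ (hb i)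
    have hyc : PowerSeries.coeff n (pw y) = PowerSeries.coeff n (pw x) := by
      apply hinjΩ
      rw [← hw, ← hc, sum_pow_char_pow]
      let pwh : integralClosure (PowerSeries D) L →+ PowerSeries D :=
                  ⟨⟨pw, pw_zero⟩, pw_add⟩
      change algebraMap D Ω (PowerSeries.coeff n (pwh y)) = _
      rw [hy, map_sum, map_sum, map_sum]
      refine Finset.sum_congr rfl fun i _ => ?_
      change algebraMap D Ω (PowerSeries.coeff n (pw _)) = _
      rw [pw_smul, cf _ _ _ (hb i), Algebra.smul_def, mul_pow, hzb, map_mul, map_pow,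
        PowerSeries.constantCoeff_C]
    have hxy : x - y ∈ F (n + 1) := by
      have hsub : x - y ∈ F n := sub_mem hx hyF
      rw [memF, pw_sub, PowerSeries.X_pow_dvd_iff] at hsub
      rw [memF, pw_sub, PowerSeries.X_pow_dvd_iff]
      intro m hm
      rcases (Nat.lt_succ_iff_lt_or_eq.mp hm) with h | rfl
      · exact hsub m h
      · rw [map_sub, hyc, sub_self]
    rw [← add_sub_cancel y x]
    exact Submodule.add_mem_sup (Submodule.sum_mem _ fun i _ => Submodule.smul_mem _ _
      (Submodule.subset_span ⟨i, rfl⟩)) hxy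
  have key2 : ∀ n, ∃ N : Submodule (PowerSeries D) (integralClosure (PowerSeries D) L), N.FG ∧
      ⊤ ≤ N ⊔ F n := by
    intro n
    induction n with
    | zero => exact ⟨⊥, Submodule.fg_bot, fun x _ => by
        rw [bot_sup_eq, memF]; simp⟩
    | succ n ih =>
      obtain ⟨N, hN, h1⟩ := ih
      obtain ⟨N', hN', h2⟩ := key n
      refine ⟨N ⊔ N', hN.sup hN', h1.trans ?_⟩
      rw [sup_assoc]
      exact sup_le_sup_left h2 _
  have div : ∀ n b, b ∈ F (n * p ^ e) → ∃ c, b = (PowerSeries.X ^ n : PowerSeries D) • c := by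
    intro n b ⟨a, ha⟩
    have hX : algebraMap (PowerSeries D) L (PowerSeries.X ^ n) ≠ 0 := by
      rw [Ne, map_eq_zero_iff _ hinj]
      exact pow_ne_zero _ PowerSeries.X_ne_zero
    have h1 := hpw b
    have h3 : ((b : L) / algebraMap (PowerSeries D) L (PowerSeries.X ^ n)) ^ p ^ e =
        algebraMap _ _ a := by
      rw [div_pow, ← h1, ha, ← map_pow, ← pow_mul, map_mul]
      rw [mul_div_cancel_left₀]
      rw [pow_mul, map_pow]
      exact pow_ne_zero _ hX
    have h4 : IsIntegral (PowerSeries D)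
        ((b : L) / algebraMap (PowerSeries D) L (PowerSeries.X ^ n)) :=
      IsIntegral.of_pow hq0 (h3 ▸ isIntegral_algebraMap)
    refine ⟨⟨_, h4⟩, Subtype.ext ?_⟩
    rw [Subalgebra.coe_smul, Algebra.smul_def]
    exact (mul_div_cancel₀ _ hX).symm
  let I : Ideal (PowerSeries D) := Ideal.span {PowerSeries.X}
  haveI : IsHausdorff I (integralClosure (PowerSeries D) L) := by
    refine ⟨fun b hb => ?_⟩
    have h1 : pw b = 0 := by
      ext m
      have h3 := hb (m + 1)
      rw [SModEq.zero, Ideal.span_singleton_pow, Submodule.ideal_span_singleton_smul] at h3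
      obtain ⟨c, -, hc⟩ := Submodule.mem_smul_pointwise_iff_exists _ _ _ |>.mp h3
      have h4 : PowerSeries.X ^ (m + 1) ∣ pw b := by
        rw [← hc, pw_smul, ← pow_mul]
        exact dvd_mul_of_dvd_left (pow_dvd_pow _ (Nat.le_mul_of_pos_right _ hq0)) _
      rw [PowerSeries.X_pow_dvd_iff] at h4
      simpa using h4 m (Nat.lt_succ_self m)
    have h2 := hpw b
    rw [h1, map_zero] at h2
    exact Subtype.ext (pow_eq_zero_iff hq0.ne' |>.mp h2.symm)
  obtain ⟨N, hN, h5⟩ := key2 (1 * p ^ e)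
  refine sv_finite_of_complete I ⟨{PowerSeries.X}, by simp [I]⟩ N hN ?_
  rw [eq_top_iff]
  refine h5.trans (sup_le_sup_left ?_ _)
  intro b hb
  obtain ⟨c, rfl⟩ := div 1 b hb
  refine Submodule.smul_mem_smul ?_ trivial
  rw [pow_one]
  exact Ideal.mem_span_singleton_self _

theorem sv_fixed_purelyInsep (K N : Type) [Field K] [Field N] [Algebra K N] [FiniteDimensional K N]
    [Normal K N] : IsPurelyInseparable K
      (IntermediateField.fixedField (⊤ : Subgroup (N ≃ₐ[K] N))) := by
  refine ⟨inferInstance, fun x hx => ?_⟩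
  have hxi : IsIntegral K x := Algebra.IsIntegral.isIntegral x
  have hmp : minpoly K (x : N) = minpoly K x := (IntermediateField.minpoly_eq x).symm
  have hroot : ∀ y : N, y ∈ (minpoly K (x : N)).aroots N → y = (x : N) := by
    intro y hy
    have h1 : Polynomial.aeval y (minpoly K (x : N)) = 0 := (Polynomial.mem_aroots.mp hy).2
    have h2 : minpoly K (x : N) = minpoly K y := minpoly.eq_of_irreducible_of_monic
      (minpoly.irreducible (Algebra.IsIntegral.isIntegral _)) h1
      (minpoly.monic (Algebra.IsIntegral.isIntegral _))
    obtain ⟨σ, hσ⟩ := (Normal.minpoly_eq_iff_mem_orbit N).mp h2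
    have h3 := fun f => (IntermediateField.mem_fixedField_iff _ _).mp x.2 f (Subgroup.mem_top f)
    have h4 : σ • y = (x : N) := hσ
    rw [← h3 σ⁻¹, ← h4]
    exact (inv_smul_smul σ y).symm
  have hsep : (minpoly K (x : N)).Separable := by rw [hmp]; exact hx
  have hcard := Polynomial.card_rootSet_eq_natDegree (K := N) hsep (Normal.splits inferInstance _)
  have hle : Fintype.card ((minpoly K (x : N)).rootSet N) ≤ 1 := by
    rw [Fintype.card_le_one_iff]
    intro a b
    apply Subtype.ext
    have ha := hroot a (by
      rw [Polynomial.mem_aroots]; exact Polynomial.mem_rootSet.mp a.2)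
    have hb := hroot b (by
      rw [Polynomial.mem_aroots]; exact Polynomial.mem_rootSet.mp b.2)
    rw [ha, hb]
  have hdeg : (minpoly K x).natDegree = 1 := by
    have := minpoly.natDegree_pos hxi
    rw [hcard, hmp] at hle
    omega
  exact minpoly.mem_range_of_degree_eq_one K x
    ((Polynomial.degree_eq_iff_natDegree_eq_of_pos one_pos).mpr hdeg)

theorem sv_sep_finite {A K L : Type} [CommRing A] [IsDomain A] [IsNoetherianRing A]
    [IsIntegrallyClosed A] [Field K] [Field L] [Algebra A K] [IsFractionRing A K] [Algebra K L]
    [Algebra A L] [IsScalarTower A K L] [FiniteDimensional K L] [Algebra.IsSeparable K L] :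
    Module.Finite A (integralClosure A L) := IsIntegralClosure.finite A K L _

theorem sv_N2_charZero {A : Type} [CommRing A] [IsDomain A] [IsNoetherianRing A]
    [IsIntegrallyClosed A] [CharZero A] : SvN2 A := by
  intro K L _ _ _ _ _ _ _ _
  haveI : CharZero K := charZero_of_injective_algebraMap (IsFractionRing.injective A K)
  exact sv_sep_finite (K := K)

theorem sv_finite_of_tower {A B L N : Type} [CommRing A] [CommRing B] [CommRing L] [CommRing N]
    [IsNoetherianRing A] [Algebra A B] [Algebra A N] [Algebra B N] [IsScalarTower A B N]
    [Module.Finite A B] [Module.Finite B (integralClosure B N)] [Algebra A L] (f : L →ₐ[A] N)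
    (hf : Function.Injective f) : Module.Finite A (integralClosure A L) := by
  haveI : Module.Finite A (integralClosure B N) := Module.Finite.trans B _
  let g : integralClosure A L →ₗ[A] integralClosure B N :=
    { toFun := fun x => ⟨f x, (x.2.map f).tower_top⟩
      map_add' := fun x y => Subtype.ext (map_add f _ _)
      map_smul' := fun c x => Subtype.ext (map_smul f _ _) }
  exact Module.Finite.of_injective g fun x y h => Subtype.ext (hf (congrArg Subtype.val h))

theorem sv_N2_of_insep {A : Type} [CommRing A] [IsDomain A] [IsNoetherianRing A]
    [IsIntegrallyClosed A]
    (H : ∀ (K L : Type) [Field K] [Field L] [Algebra A K] [IsFractionRing A K] [Algebra K L]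
      [Algebra A L] [IsScalarTower A K L] [FiniteDimensional K L] [IsPurelyInseparable K L],
      Module.Finite A (integralClosure A L)) : SvN2 A := by
  intro K L _ _ _ _ _ _ _ _
  let N := IntermediateField.normalClosure K L (AlgebraicClosure L)
  haveI : FiniteDimensional K N := inferInstance
  haveI : Normal K N := inferInstance
  let K' := IntermediateField.fixedField (⊤ : Subgroup (N ≃ₐ[K] N))
  haveI : IsPurelyInseparable K K' := sv_fixed_purelyInsep K N
  haveI : IsGalois K' N := IsGalois.of_fixed_field N (⊤ : Subgroup (N ≃ₐ[K] N))
  haveI : IsScalarTower A K K' := inferInstance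
  let B := integralClosure A K'
  haveI : Module.Finite A B := H K K'
  haveI : IsFractionRing B K' := integralClosure.isFractionRing_of_finite_extension K K'
  haveI : IsIntegrallyClosed B := integralClosure.isIntegrallyClosedOfFiniteExtension K
  haveI : IsNoetherianRing B := IsNoetherianRing.of_finite A B
  haveI : Module.Finite B (integralClosure B N) := sv_sep_finite (K := K')
  haveI : IsScalarTower A B N := IsScalarTower.of_algebraMap_eq fun _ => rfl
  exact sv_finite_of_tower (B := B) (N := N) ((IsScalarTower.toAlgHom K L N).restrictScalars A)
    (algebraMap L N).injective

theorem sv_N2_powerSeries {D : Type} [CommRing D] [IsDomain D] [IsNoetherianRing D]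
    [IsIntegrallyClosed D] (p : ℕ) [Fact p.Prime] [CharP D p] (h2 : SvN2 D) :
    SvN2 (PowerSeries D) := by
  haveI := sv_powerSeries_normal D
  refine sv_N2_of_insep ?_
  intro K L _ _ _ _ _ _ _ _ _
  haveI : CharP K p := charP_of_injective_ringHom
    (f := (algebraMap (PowerSeries D) K).comp PowerSeries.C)
    ((IsFractionRing.injective _ K).comp PowerSeries.C_injective) p
  haveI : ExpChar K p := ExpChar.prime Fact.out
  obtain ⟨e, he⟩ := (IsPurelyInseparable.hasExponent_iff' K L p).mp inferInstance
  exact sv_tate_step (K := K) p h2 e he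

theorem sv_N2_equiv {D D' : Type} [CommRing D] [CommRing D'] (e : D ≃+* D')
    (h : SvN2 D) : SvN2 D' := by
  intro K L _ _ _ _ _ _ _ _
  letI : Algebra D K := ((algebraMap D' K).comp e.toRingHom).toAlgebra
  letI : Algebra D L := ((algebraMap D' L).comp e.toRingHom).toAlgebra
  letI : Algebra D D' := e.toRingHom.toAlgebra
  haveI : IsScalarTower D K L := IsScalarTower.of_algebraMap_eq fun x =>
    IsScalarTower.algebraMap_apply D' K L (e x)
  haveI : IsScalarTower D D' L := IsScalarTower.of_algebraMap_eq fun x => rfl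
  haveI : IsFractionRing D K := IsFractionRing.of_ringEquiv_left e fun x => rfl
  haveI := h K L
  have heq : ∀ x : L, IsIntegral D' x → IsIntegral D x := by
    intro x hx
    haveI : Algebra.IsIntegral D D' := ⟨fun y => by
      obtain ⟨z, rfl⟩ := e.surjective y; exact isIntegral_algebraMap⟩
    exact isIntegral_trans x hx
  let g : integralClosure D L →+ integralClosure D' L :=
    { toFun := fun x => ⟨x, x.2.tower_top⟩
      map_zero' := rfl
      map_add' := fun x y => rfl }
  obtain ⟨k, v, hv⟩ := Submodule.fg_iff_exists_fin_generating_family.mp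
    (Module.finite_def.mp (h K L))
  refine ⟨Submodule.fg_iff_exists_fin_generating_family.mpr ⟨k, fun i => g (v i), ?_⟩⟩
  rw [eq_top_iff]
  rintro ⟨x, hx⟩ -
  have h1 : (⟨x, heq x hx⟩ : integralClosure D L) ∈ Submodule.span D (Set.range v) := by
    rw [hv]; trivial
  obtain ⟨c, hc⟩ := (Submodule.mem_span_range_iff_exists_fun D).mp h1
  refine (Submodule.mem_span_range_iff_exists_fun D').mpr ⟨fun i => e (c i), ?_⟩
  have h3 := congrArg g hc
  rw [map_sum] at h3
  refine Eq.trans (Finset.sum_congr rfl fun i _ => ?_) h3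
  apply Subtype.ext
  change e (c i) • (v i : L) = c i • (v i : L)
  rw [Algebra.smul_def, Algebra.smul_def]; rfl

theorem sv_N2_field (k : Type) [Field k] : SvN2 k := by
  intro K L _ _ _ _ _ _ _ _
  haveI : Module.Finite k K := by
    have hs : Function.Surjective (algebraMap k K) :=
      IsFractionRing.surjective_iff_isField.mpr (Field.toIsField k)
    exact Module.Finite.of_surjective (Algebra.linearMap k K) hs
  haveI : Module.Finite k L := Module.Finite.trans K L
  infer_instance

theorem sv_N2_mvPowerSeries (k : Type) [Field k] (p : ℕ) [Fact p.Prime] [CharP k p] (n : ℕ) :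
    SvN2 (MvPowerSeries (Fin n) k) := by
  induction n with
  | zero => exact sv_N2_equiv (MvPowerSeries.isEmptyEquiv (Fin 0) k).symm.toRingEquiv (sv_N2_field k)
  | succ n ih =>
    haveI := sv_mvPowerSeries_domain k n
    haveI := sv_mvPowerSeries_normal k n
    haveI : CharP (MvPowerSeries (Fin n) k) p := charP_of_injective_ringHom
      (f := (MvPowerSeries.C : k →+* MvPowerSeries (Fin n) k)) (RingHom.injective _) p
    exact sv_N2_equiv (MvPowerSeries.finSuccEquiv k n).symm.toRingEquiv (sv_N2_powerSeries p ih)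

theorem sv_adjoin_root {F Q k : Type} [Field F] [CommRing Q] [Field k] [Algebra F Q] (f : Q →+* k)
    (p : ℕ) [Fact p.Prime] [CharP k p] (τ : Q) (a : F) (ha : algebraMap F Q a = τ ^ p)
    (hτ : ∀ s : F, f (algebraMap F Q s) ≠ f τ) (x : Q) (hx : x ∈ Algebra.adjoin F {τ})
    (hfx : f x = 0) : x = 0 := by
  have hp : p.Prime := Fact.out
  letI : Algebra F k := (f.comp (algebraMap F Q)).toAlgebra
  let fa : Q →ₐ[F] k := { f with commutes' := fun _ => rfl }
  have hirr : Irreducible (Polynomial.X ^ p - Polynomial.C a) := by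
    refine X_pow_sub_C_irreducible_of_prime hp fun b hb => hτ b ?_
    apply frobenius_inj k p
    simp only [frobenius_def, ← map_pow, hb, ha]
  have hmon : (Polynomial.X ^ p - Polynomial.C a).Monic := Polynomial.monic_X_pow_sub_C a hp.ne_zero
  have hroot : ∀ y : Q, y = τ → Polynomial.aeval y (Polynomial.X ^ p - Polynomial.C a) = 0 := by
    rintro y rfl
    simp [ha]
  have hmin : Polynomial.X ^ p - Polynomial.C a = minpoly F (fa τ) :=
    minpoly.eq_of_irreducible_of_monic hirr (by
      rw [Polynomial.aeval_algHom_apply, hroot τ rfl, map_zero]) hmon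
  rw [Algebra.adjoin_singleton_eq_range_aeval] at hx
  obtain ⟨g, rfl⟩ := hx
  have h1 : Polynomial.aeval (fa τ) g = 0 := by
    rw [Polynomial.aeval_algHom_apply]; exact hfx
  obtain ⟨h, rfl⟩ := hmin ▸ minpoly.dvd F (fa τ) h1
  change Polynomial.aeval τ _ = 0
  rw [map_mul, hroot τ rfl, zero_mul]

theorem sv_lift_field {Q k : Type} [CommRing Q] [Field k] (p : ℕ) [Fact p.Prime] [CharP Q p]
    (f : Q →+* k) (hf : Function.Surjective f) (hker : ∀ v, f v = 0 → v ^ p = 0) :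
    ∃ S : Subring Q, (∀ s ∈ S, f s = 0 → s = 0) ∧ ∀ y, ∃ s ∈ S, f s = y := by
  have hp : p.Prime := Fact.out
  haveI : CharP k p := by
    rw [CharP.charP_iff_prime_eq_zero hp, ← map_natCast f, CharP.cast_eq_zero, map_zero]
  obtain ⟨S, hS0, hSmax⟩ := zorn_le_nonempty₀
    {S : Subring Q | (∀ x : Q, x ^ p ∈ S) ∧ ∀ s ∈ S, f s = 0 → s = 0} (by
      intro c hc hchain y hy
      refine ⟨sSup c, ⟨fun x => ?_, fun s hs h0 => ?_⟩, fun z hz => le_sSup hz⟩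
      · exact (le_sSup hy : y ≤ sSup c) ((hc hy).1 x)
      · rw [Subring.mem_sSup_of_directedOn ⟨y, hy⟩ hchain.directedOn] at hs
        obtain ⟨t, ht, hst⟩ := hs
        exact (hc ht).2 s hst h0) (frobenius Q p).range (by
      refine ⟨fun x => ⟨x, rfl⟩, ?_⟩
      rintro _ ⟨x, rfl⟩ h
      rw [frobenius_def] at h ⊢
      rw [map_pow, pow_eq_zero_iff hp.ne_zero] at h
      exact hker x h)
  obtain ⟨⟨hSp, hSk⟩, hmax⟩ := hSmax
  refine ⟨S, hSk, ?_⟩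
  by_contra! hcon
  obtain ⟨y, hy⟩ := hcon
  obtain ⟨τ, rfl⟩ := hf y
  haveI : Nontrivial Q := f.domain_nontrivial
  have hfield : IsField S := by
    refine ⟨⟨0, 1, zero_ne_one⟩, mul_comm, ?_⟩
    rintro ⟨s, hs⟩ hs0
    have hfs : f s ≠ 0 := fun h => hs0 (Subtype.ext (hSk s hs h))
    obtain ⟨u, hu⟩ := hf (f s)⁻¹
    have h1 : s ^ p * u ^ p - 1 = 0 := hSk _
      (sub_mem (mul_mem (hSp s) (hSp u)) (one_mem _)) (by
        rw [map_sub, map_mul, map_pow, map_pow, hu, ← mul_pow, mul_inv_cancel₀ hfs, one_pow, map_one,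
          sub_self])
    refine ⟨⟨s ^ (p - 1) * u ^ p, mul_mem (pow_mem hs _) (hSp u)⟩, Subtype.ext ?_⟩
    change s * (s ^ (p - 1) * u ^ p) = 1
    rw [← mul_assoc, ← pow_succ', Nat.sub_add_cancel hp.pos, sub_eq_zero.mp h1]
  letI := hfield.toField
  let T : Subring Q := (Algebra.adjoin S {τ}).toSubring
  have hST : S ≤ T := fun s hs => (Algebra.adjoin S {τ}).algebraMap_mem ⟨s, hs⟩
  have hT : T ∈ {S : Subring Q | (∀ x : Q, x ^ p ∈ S) ∧ ∀ s ∈ S, f s = 0 → s = 0} := by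
    refine ⟨fun x => hST (hSp x), fun s hs h0 => ?_⟩
    exact sv_adjoin_root (F := S) f p τ ⟨τ ^ p, hSp τ⟩ rfl (fun s => hy s s.2) s hs h0
  exact hy τ (hmax hT hST (Algebra.subset_adjoin (Set.mem_singleton τ))) rfl

def SvGood (A : Type) [CommRing A] [IsLocalRing A] (p n : ℕ) (D : Subring A) : Prop :=
  (∀ x ∈ maximalIdeal A ^ n, x ∈ D) ∧
  (∀ x ∈ D, x ∈ maximalIdeal A → ∃ d ∈ D, x - p * d ∈ maximalIdeal A ^ n) ∧
  (∀ a : A, ∃ d ∈ D, a - d ∈ maximalIdeal A)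

theorem sv_good_step {A : Type} [CommRing A] [IsLocalRing A] (p : ℕ) [Fact p.Prime]
    (hpm : (p : A) ∈ maximalIdeal A) (n : ℕ) (hn : 1 ≤ n) (D : Subring A) (hD : SvGood A p n D) :
    ∃ D' : Subring A, SvGood A p (n + 1) D' ∧ D' ≤ D ∧
      ∀ d ∈ D, ∃ d' ∈ D', d - d' ∈ maximalIdeal A ^ n := by
  have hp : p.Prime := Fact.out
  obtain ⟨h1, h2, h3⟩ := hD
  let J : Ideal D := Ideal.span {(p : D)} ⊔ (maximalIdeal A ^ (n + 1)).comap D.subtype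
  let f0 : D →+* ResidueField A := (residue A).comp D.subtype
  have hf0 : ∀ x : D, f0 x = 0 ↔ (x : A) ∈ maximalIdeal A := fun x => by
    change residue A (x : A) = 0 ↔ _
    rw [residue_eq_zero_iff]
  have hJ : ∀ x : D, x ∈ J ↔ ∃ d : D, (x : A) - p * d ∈ maximalIdeal A ^ (n + 1) := by
    intro x
    constructor
    · intro hx
      obtain ⟨a, ha, b, hb, rfl⟩ := Submodule.mem_sup.mp hx
      obtain ⟨d, rfl⟩ := Ideal.mem_span_singleton.mp ha
      refine ⟨d, ?_⟩
      have : (((p : D) * d + b : D) : A) - p * d = b := by push_cast; ring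
      rw [this]; exact hb
    · rintro ⟨d, hd⟩
      have : x = (p : D) * d + (x - (p : D) * d) := by ring
      rw [this]
      refine Submodule.add_mem_sup (Ideal.mem_span_singleton.mpr ⟨d, rfl⟩) ?_
      rw [Ideal.mem_comap]
      have h : D.subtype (x - (p : D) * d) = (x : A) - p * d := by simp
      rw [h]; exact hd
  have hJk : ∀ x ∈ J, f0 x = 0 := by
    intro x hx
    obtain ⟨d, hd⟩ := (hJ x).mp hx
    rw [hf0]
    have := Ideal.add_mem _ (Ideal.pow_le_self (Nat.succ_ne_zero n) hd)
      (Ideal.mul_mem_right (d : A) _ hpm)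
    simpa using this
  let f : D ⧸ J →+* ResidueField A := Ideal.Quotient.lift J f0 hJk
  haveI : Nontrivial (D ⧸ J) := f.domain_nontrivial
  haveI : CharP (D ⧸ J) p := by
    rw [CharP.charP_iff_prime_eq_zero hp]
    have : ((p : D) : D) ∈ J := Ideal.mem_sup_left (Ideal.mem_span_singleton_self _)
    have := Ideal.Quotient.eq_zero_iff_mem.mpr this
    simpa using this
  have hfs : Function.Surjective f := by
    intro y
    obtain ⟨a, rfl⟩ := residue_surjective y
    obtain ⟨d, hd, had⟩ := h3 a
    refine ⟨Ideal.Quotient.mk J ⟨d, hd⟩, ?_⟩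
    change residue A d = residue A a
    rw [eq_comm, ← sub_eq_zero, ← map_sub, residue_eq_zero_iff]
    exact had
  have hker : ∀ v, f v = 0 → v ^ p = 0 := by
    intro v hv
    obtain ⟨x, rfl⟩ := Ideal.Quotient.mk_surjective v
    have hx : (x : A) ∈ maximalIdeal A := (hf0 x).mp hv
    obtain ⟨d, hd, hxd⟩ := h2 x x.2 hx
    let μ : D := ⟨_, h1 _ hxd⟩
    have h4 : Ideal.Quotient.mk J x = Ideal.Quotient.mk J μ := by
      rw [Ideal.Quotient.eq, hJ]
      refine ⟨⟨d, hd⟩, ?_⟩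
      have : ((x - μ : D) : A) - p * d = 0 := by simp [μ]
      change ((x - μ : D) : A) - p * d ∈ _
      rw [this]; exact zero_mem _
    rw [h4, ← map_pow, Ideal.Quotient.eq_zero_iff_mem, hJ]
    refine ⟨0, ?_⟩
    have : ((μ ^ p : D) : A) = (x - p * d) ^ p := by simp [μ]
    rw [this]
    simp only [ZeroMemClass.coe_zero, mul_zero, sub_zero]
    have h5 := Ideal.pow_mem_pow hxd p
    rw [← pow_mul] at h5
    refine Ideal.pow_le_pow_right ?_ h5
    have := hp.two_le
    nlinarith
  obtain ⟨S, hS1, hS2⟩ := sv_lift_field p f hfs hker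
  let D' : Subring A := (S.comap (Ideal.Quotient.mk J)).map D.subtype
  have memD' : ∀ x : D, (x : A) ∈ D' ↔ Ideal.Quotient.mk J x ∈ S := by
    intro x
    constructor
    · rintro ⟨y, hy, hxy⟩
      have : y = x := Subtype.ext hxy
      subst this
      exact hy
    · intro h; exact ⟨x, h, rfl⟩
  have hD'D : D' ≤ D := by
    rintro _ ⟨y, -, rfl⟩; exact y.2
  have hJD' : ∀ x ∈ J, (x : A) ∈ D' := by
    intro x hx
    rw [memD', Ideal.Quotient.eq_zero_iff_mem.mpr hx]; exact zero_mem _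
  have hmD' : ∀ x ∈ maximalIdeal A ^ (n + 1), x ∈ D' := by
    intro x hx
    have hxD : x ∈ D := h1 x (Ideal.pow_le_pow_right (Nat.le_succ n) hx)
    exact hJD' ⟨x, hxD⟩ ((hJ _).mpr ⟨0, by simpa using hx⟩)
  have hpD' : ∀ d ∈ D, (p : A) * d ∈ D' := by
    intro d hd
    have := hJD' ((p : D) * ⟨d, hd⟩) ((hJ _).mpr ⟨⟨d, hd⟩, by simp⟩)
    simpa using this
  have hDk : ∀ d ∈ D, ∃ d' ∈ D', d - d' ∈ maximalIdeal A := by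
    intro d hd
    obtain ⟨s, hs, hsd⟩ := hS2 (residue A d)
    obtain ⟨y, rfl⟩ := Ideal.Quotient.mk_surjective s
    refine ⟨y, (memD' y).mpr hs, ?_⟩
    have : residue A y = residue A d := hsd
    rw [← residue_eq_zero_iff, map_sub, this, sub_self]
  have hDD' : ∀ d ∈ D, ∃ d' ∈ D', d - d' ∈ maximalIdeal A ^ n := by
    intro d hd
    obtain ⟨d', hd', hdd⟩ := hDk d hd
    obtain ⟨e, he, hee⟩ := h2 _ (sub_mem hd (hD'D hd')) hdd
    exact ⟨d' + p * e, add_mem hd' (hpD' e he), by rwa [← sub_sub]⟩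
  refine ⟨D', ⟨hmD', ?_, ?_⟩, hD'D, hDD'⟩
  · intro x hx hxm
    have h4 : (⟨x, hD'D hx⟩ : D) ∈ J := by
      rw [← Ideal.Quotient.eq_zero_iff_mem]
      refine hS1 _ ((memD' ⟨x, hD'D hx⟩).mp hx) ?_
      exact (hf0 _).mpr hxm
    obtain ⟨d, hd⟩ := (hJ _).mp h4
    obtain ⟨d', hd', hdd⟩ := hDD' d d.2
    refine ⟨d', hd', ?_⟩
    have h5 : x - p * d' = (x - p * d) + (d - d') * p := by ring
    rw [h5]
    refine Ideal.add_mem _ hd ?_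
    rw [pow_succ]
    exact Ideal.mul_mem_mul hdd hpm
  · intro a
    obtain ⟨d, hd, had⟩ := h3 a
    obtain ⟨d', hd', hdd⟩ := hDk d hd
    refine ⟨d', hd', ?_⟩
    have := Ideal.add_mem _ had hdd
    simpa using this

theorem sv_good_chain {A : Type} [CommRing A] [IsLocalRing A] (p : ℕ) [Fact p.Prime]
    (hpm : (p : A) ∈ maximalIdeal A) : ∃ D : ℕ → Subring A,
      (∀ n, SvGood A p (n + 1) (D n)) ∧ (∀ n, D (n + 1) ≤ D n) ∧
      ∀ n, ∀ d ∈ D n, ∃ d' ∈ D (n + 1), d - d' ∈ maximalIdeal A ^ (n + 1) := by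
  have h0 : SvGood A p 1 ⊤ := ⟨fun _ _ => trivial, fun x _ hx => ⟨0, trivial, by simpa using hx⟩,
    fun a => ⟨a, trivial, by simp⟩⟩
  choose! g hg1 hg2 hg3 using sv_good_step (A := A) p hpm
  let D : ℕ → Subring A := fun n => Nat.rec ⊤ (fun n E => g (n + 1) E) n
  have hD : ∀ n, SvGood A p (n + 1) (D n) := by
    intro n
    induction n with
    | zero => exact h0
    | succ n ih => exact hg1 _ (Nat.le_add_left 1 n) _ ih
  exact ⟨D, hD, fun n => hg2 _ (Nat.le_add_left 1 n) _ (hD n),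
    fun n => hg3 _ (Nat.le_add_left 1 n) _ (hD n)⟩

theorem sv_haus {A : Type} [CommRing A] (I : Ideal A) [IsHausdorff I A] (x : A)
    (h : ∀ n, x ∈ I ^ n) : x = 0 := by
  refine IsHausdorff.haus' (I := I) x fun n => ?_
  rw [SModEq.zero]
  simpa using h n

theorem sv_limit {A : Type} [CommRing A] (I : Ideal A) [IsAdicComplete I A] (n : ℕ) (s : ℕ → A)
    (h : ∀ j, s j - s (j + 1) ∈ I ^ (n + j)) : ∃ L, ∀ j, s j - L ∈ I ^ (n + j) := by
  have h1 : ∀ j k, s j - s (j + k) ∈ I ^ (n + j) := by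
    intro j k
    induction k with
    | zero => simp
    | succ k ih =>
      have h2 := Ideal.pow_le_pow_right (by omega : n + j ≤ n + (j + k)) (h (j + k))
      have := Ideal.add_mem _ ih h2
      simpa [add_assoc] using this
  obtain ⟨L, hL⟩ := IsPrecomplete.prec' (I := I) s (by
    intro a b hab
    rw [SModEq.sub_mem]
    obtain ⟨k, rfl⟩ := Nat.exists_eq_add_of_le hab
    simpa using Ideal.pow_le_pow_right (by omega : a ≤ n + a) (h1 a k))
  refine ⟨L, fun j => ?_⟩
  have h2 := hL (n + j)
  rw [SModEq.sub_mem] at h2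
  have h3 : s (n + j) - L ∈ I ^ (n + j) := by simpa using h2
  have h4 := h1 j n
  rw [add_comm j n] at h4
  have := Ideal.add_mem _ h4 h3
  simpa using this

theorem sv_coeff_subring {A : Type} [CommRing A] [IsDomain A] [IsLocalRing A] [IsNoetherianRing A]
    [IsAdicComplete (maximalIdeal A) A] (p : ℕ) [Fact p.Prime]
    (hpm : (p : A) ∈ maximalIdeal A) : ∃ C : Subring A,
      (∀ x, (∀ n, ∃ c ∈ C, x - c ∈ maximalIdeal A ^ n) → x ∈ C) ∧
      (∀ a : A, ∃ c ∈ C, a - c ∈ maximalIdeal A) ∧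
      (∀ x ∈ C, x ∈ maximalIdeal A → ∃ c ∈ C, x = p * c) := by
  obtain ⟨D, hD1, hD2, hD3⟩ := sv_good_chain (A := A) p hpm
  have hanti : Antitone D := antitone_nat_of_succ_le hD2
  have memC : ∀ x, x ∈ (⨅ n, D n) ↔ ∀ n, x ∈ D n := fun x => Subring.mem_iInf
  have hclosed : ∀ x, (∀ n, ∃ c ∈ (⨅ n, D n), x - c ∈ maximalIdeal A ^ n) → x ∈ (⨅ n, D n) := by
    intro x hx
    rw [memC]
    intro n
    obtain ⟨c, hc, hxc⟩ := hx (n + 1)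
    have := add_mem ((hD1 n).1 _ hxc) ((memC c).mp hc n)
    simpa using this
  have happrox : ∀ n, ∀ d ∈ D n, ∃ c ∈ (⨅ n, D n), d - c ∈ maximalIdeal A ^ (n + 1) := by
    intro n d hd
    choose! g hg1 hg2 using hD3
    let s : ℕ → A := fun j => Nat.rec d (fun j x => g (n + j) x) j
    have hs : ∀ j, s j ∈ D (n + j) := by
      intro j
      induction j with
      | zero => exact hd
      | succ j ih => exact hg1 _ _ ih
    obtain ⟨L, hL⟩ := sv_limit (maximalIdeal A) (n + 1) s (fun j => by
      have := hg2 (n + j) (s j) (hs j)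
      rwa [add_right_comm] at this)
    refine ⟨L, ?_, hL 0⟩
    rw [memC]
    intro j
    have h1 := hL j
    have h2 : s j - L ∈ D (n + j) := (hD1 (n + j)).1 _ (by rwa [add_right_comm] at h1)
    have h3 := sub_mem (hs j) h2
    rw [sub_sub_cancel] at h3
    exact hanti (by omega) h3
  refine ⟨⨅ n, D n, hclosed, ?_, ?_⟩
  · intro a
    obtain ⟨d, hd, had⟩ := (hD1 0).2.2 a
    obtain ⟨c, hc, hdc⟩ := happrox 0 d hd
    refine ⟨c, hc, ?_⟩
    have := Ideal.add_mem _ had (by simpa using hdc)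
    simpa using this
  · intro x hx hxm
    have h1 : ∀ n, ∃ c ∈ (⨅ n, D n), x - p * c ∈ maximalIdeal A ^ n := by
      intro n
      obtain ⟨d, hd, hxd⟩ := (hD1 n).2.1 x ((memC x).mp hx n) hxm
      obtain ⟨c, hc, hdc⟩ := happrox n d hd
      refine ⟨c, hc, Ideal.pow_le_pow_right (Nat.le_succ n) ?_⟩
      have := Ideal.add_mem _ hxd (Ideal.mul_mem_left _ (p : A) hdc)
      convert this using 1
      ring
    by_cases hp0 : (p : A) = 0
    · refine ⟨0, zero_mem _, ?_⟩
      rw [mul_zero]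
      refine sv_haus (maximalIdeal A) x fun n => ?_
      obtain ⟨c, -, hc⟩ := h1 n
      simpa [hp0] using hc
    · choose c hcC hc using h1
      obtain ⟨k, hk⟩ := Ideal.exists_pow_inf_eq_pow_smul (maximalIdeal A) (Ideal.span {(p : A)})
      have hAR : ∀ n, ∀ b : A, (p : A) * b ∈ maximalIdeal A ^ (n + k) → b ∈ maximalIdeal A ^ n := by
        intro n b hb
        have h2 : (p : A) * b ∈ (maximalIdeal A ^ (n + k) • ⊤ ⊓ Ideal.span {(p : A)} : Ideal A) :=
          ⟨by simpa using hb, Ideal.mem_span_singleton.mpr ⟨b, rfl⟩⟩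
        rw [hk (n + k) (by omega), Nat.add_sub_cancel] at h2
        have h3 : (p : A) * b ∈ (maximalIdeal A ^ n * Ideal.span {(p : A)} : Ideal A) :=
          Ideal.mul_mono_right inf_le_right h2
        rw [Ideal.mem_mul_span_singleton] at h3
        obtain ⟨z, hz, hzb⟩ := h3
        rw [mul_comm z] at hzb
        rwa [← mul_left_cancel₀ hp0 hzb]
      obtain ⟨L, hL⟩ := sv_limit (maximalIdeal A) 0 (fun n => c (n + k)) (fun j => by
        rw [zero_add]
        apply hAR
        have h2 := hc (j + k)
        have h3 := Ideal.pow_le_pow_right (by omega : j + k ≤ j + 1 + k) (hc (j + 1 + k))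
        have := Ideal.sub_mem _ h3 h2
        convert this using 1
        ring)
      refine ⟨L, ?_, ?_⟩
      · refine hclosed L fun n => ⟨c (n + k), hcC _, ?_⟩
        have := hL n
        rw [zero_add] at this
        rw [← neg_sub]
        exact Ideal.neg_mem_iff _ |>.mpr this
      · rw [← sub_eq_zero]
        refine sv_haus (maximalIdeal A) _ fun n => ?_
        have h2 := Ideal.pow_le_pow_right (by omega : n ≤ n + k) (hc (n + k))
        have h3 := hL n
        rw [zero_add] at h3
        have := Ideal.add_mem _ h2 (Ideal.mul_mem_left _ (p : A) h3)
        convert this using 1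
        ring

/-- the coefficient ring interface -/
def SvCoeff (A : Type) [CommRing A] [IsLocalRing A] (C : Type) [CommRing C] (φ : C →+* A)
    (π : C) : Prop :=
  IsDomain C ∧ IsNoetherianRing C ∧ IsIntegrallyClosed C ∧ IsAdicComplete (Ideal.span {π}) C ∧
  (∀ a : A, ∃ c, a - φ c ∈ maximalIdeal A) ∧ φ π ∈ maximalIdeal A ∧
  ((π = 0 ∧ IsField C) ∨ (φ π ≠ 0 ∧ ringKrullDim C ≤ 1 ∧ CharZero C))

theorem sv_coeff_charp {A : Type} [CommRing A] [IsDomain A] [IsLocalRing A] [IsNoetherianRing A]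
    [IsAdicComplete (maximalIdeal A) A] (p : ℕ) [Fact p.Prime]
    (hpm : (p : A) ∈ maximalIdeal A) : ∃ (C : Subring A) (π : C), SvCoeff A C C.subtype π := by
  obtain ⟨C, hcl, hsurj, hdiv⟩ := sv_coeff_subring (A := A) p hpm
  have hp : p.Prime := Fact.out
  have hpow : ∀ n, ∀ x : C, (p : C) ^ n ∣ x → (x : A) ∈ maximalIdeal A ^ n := by
    rintro n _ ⟨y, rfl⟩
    push_cast
    exact Ideal.mul_mem_right _ _ (Ideal.pow_mem_pow hpm n)
  have hsep : ∀ x : C, (∀ n, (p : C) ^ n ∣ x) → x = 0 := fun x hx =>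
    Subtype.ext (sv_haus (maximalIdeal A) x fun n => hpow n x (hx n))
  have hcomp : IsAdicComplete (Ideal.span {(p : C)}) C := by
    have hmem : ∀ n (x : C), x ∈ (Ideal.span {(p : C)} ^ n • ⊤ : Ideal C) ↔ (p : C) ^ n ∣ x := by
      intro n x
      rw [Ideal.span_singleton_pow, smul_eq_mul, Ideal.mul_top, Ideal.mem_span_singleton]
    refine { haus' := fun x hx => hsep x fun n => ?_, prec' := fun f hf => ?_ }
    · have := hx n
      rwa [SModEq.zero, hmem] at this
    · have h1 : ∀ n, ∃ e : C, f n - f (n + 1) = (p : C) ^ n * e := fun n => by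
        have := hf (Nat.le_succ n)
        rwa [SModEq.sub_mem, hmem] at this
      choose e he using h1
      have lim : ∀ n, ∃ L : C, ∀ t, ((∑ i ∈ Finset.range t, (p : C) ^ i * e (n + i) : C) : A) - L ∈
          maximalIdeal A ^ t := by
        intro n
        obtain ⟨L, hL⟩ := sv_limit (maximalIdeal A) 0
          (fun t => ((∑ i ∈ Finset.range t, (p : C) ^ i * e (n + i) : C) : A)) (fun t => by
            rw [Finset.sum_range_succ, zero_add, Subring.coe_add, sub_add_cancel_left]
            exact neg_mem (hpow t _ ⟨_, rfl⟩))
        simp only [zero_add] at hL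
        exact ⟨⟨L, hcl L fun t => ⟨((∑ i ∈ Finset.range t, (p : C) ^ i * e (n + i) : C) : A),
          Subtype.property _, by rw [← neg_sub]; exact neg_mem (hL t)⟩⟩, hL⟩
      choose E hE using lim
      have tel : ∀ n t, f n - f (n + t) = (p : C) ^ n * ∑ i ∈ Finset.range t, (p : C) ^ i * e (n + i) := by
        intro n t
        induction t with
        | zero => simp
        | succ t ih =>
          rw [Finset.sum_range_succ, mul_add, ← ih, ← mul_assoc, ← pow_add, ← he, ← add_assoc]
          ring
      refine ⟨f 0 - E 0, fun n => ?_⟩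
      rw [SModEq.sub_mem, hmem]
      refine ⟨E n, ?_⟩
      rw [← sub_eq_zero]
      apply Subtype.ext
      refine sv_haus (maximalIdeal A) _ fun t => ?_
      have a1 := hE n t
      have a2 := Ideal.pow_le_pow_right (by omega : t ≤ n + t) (hE 0 (n + t))
      have b1 := congrArg (Subtype.val : C → A) (tel n t)
      have b2 := congrArg (Subtype.val : C → A) (tel 0 (n + t))
      simp only [zero_add, pow_zero, one_mul] at b2 a2
      rw [← b2] at a2
      rw [Subring.coe_mul] at b1
      have := sub_mem (Ideal.mul_mem_left _ (((p : C) ^ n : C) : A) a1) a2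
      rw [mul_sub, ← b1] at this
      convert this using 1
      push_cast
      ring
  have hjac := IsAdicComplete.le_jacobson_bot (Ideal.span {(p : C)})
  have hunit : ∀ x : C, (x : A) ∉ maximalIdeal A → IsUnit x := by
    intro x hx
    have hxu : IsUnit (x : A) := by
      by_contra h; exact hx ((mem_maximalIdeal _).mpr h)
    obtain ⟨b, hb⟩ := hxu.exists_right_inv
    obtain ⟨u, hu, hbu⟩ := hsurj b
    have h1 : ((1 - x * ⟨u, hu⟩ : C) : A) ∈ maximalIdeal A := by
      have := Ideal.mul_mem_left _ (x : A) hbu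
      rw [mul_sub, hb] at this
      simpa using this
    obtain ⟨c, hc, h2⟩ := hdiv _ (Subtype.property _) h1
    have h3 : x * ⟨u, hu⟩ = (p : C) * (-⟨c, hc⟩) + 1 := by
      apply Subtype.ext
      push_cast at h2 ⊢
      linear_combination -h2
    have h4 : IsUnit ((p : C) * (-⟨c, hc⟩) + 1) := by
      have := Ideal.mem_jacobson_bot.mp (hjac (Ideal.mem_span_singleton_self (p : C))) (-⟨c, hc⟩)
      exact this
    rw [← h3] at h4
    exact isUnit_of_mul_isUnit_left h4
  have hsurj' : ∀ a : A, ∃ c, a - C.subtype c ∈ maximalIdeal A := fun a => by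
    obtain ⟨c, hc, h⟩ := hsurj a
    exact ⟨⟨c, hc⟩, h⟩
  have hφp : C.subtype (p : C) = (p : A) := by simp
  by_cases hp0 : (p : A) = 0
  · have hpC : (p : C) = 0 := Subtype.ext (by simpa using hp0)
    have hfield : IsField C := by
      refine ⟨⟨0, 1, zero_ne_one⟩, mul_comm, ?_⟩
      intro a ha
      refine (hunit a fun h => ha ?_).exists_right_inv
      obtain ⟨c, -, hc⟩ := hdiv a a.2 h
      exact Subtype.ext (by simpa [hp0] using hc)
    refine ⟨C, (p : C), inferInstance, ?_, ?_, hcomp, hsurj', hφp ▸ hpm, Or.inl ⟨hpC, hfield⟩⟩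
    · letI := hfield.toField
      exact (inferInstance : IsNoetherianRing C)
    · letI := hfield.toField
      exact (inferInstance : IsIntegrallyClosed C)
  · have hpC : (p : C) ≠ 0 := fun h => hp0 (by simpa using congrArg (Subtype.val : C → A) h)
    have hpu : ¬ IsUnit (p : C) := fun h => by
      have := h.map C.subtype
      rw [hφp] at this
      exact (mem_maximalIdeal _).mp hpm this
    have hndiv : ∀ x : C, ¬ (p : C) ∣ x → IsUnit x := by
      intro x hx
      refine hunit x fun h => hx ?_
      obtain ⟨c, hc, h2⟩ := hdiv x x.2 h
      exact ⟨⟨c, hc⟩, Subtype.ext (by simpa using h2)⟩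
    have hprime : Prime (p : C) := by
      refine ⟨hpC, hpu, fun a b hab => ?_⟩
      by_contra! h
      exact hpu (isUnit_of_dvd_unit hab ((hndiv a h.1).mul (hndiv b h.2)))
    haveI : IsDiscreteValuationRing C := by
      refine IsDiscreteValuationRing.ofHasUnitMulPowIrreducibleFactorization
        ⟨(p : C), hprime.irreducible, fun {x} hx => ?_⟩
      have hfm : FiniteMultiplicity (p : C) x := by
        by_contra h
        exact hx (hsep x fun n => by
          rw [FiniteMultiplicity.not_iff_forall] at h
          exact h n)
      obtain ⟨c, hc, hpc⟩ := hfm.exists_eq_pow_mul_and_not_dvd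
      obtain ⟨u, hu⟩ := hndiv c hpc
      exact ⟨_, u, by rw [hu]; exact hc.symm⟩
    refine ⟨C, (p : C), inferInstance, inferInstance, inferInstance, hcomp, hsurj', hφp ▸ hpm,
      Or.inr ⟨by rwa [hφp], ?_, ?_⟩⟩
    · exact (IsPrincipalIdealRing.ringKrullDim_eq_one C
        (IsDiscreteValuationRing.not_isField C)).le
    · obtain ⟨q, hq⟩ := CharP.exists C
      rcases CharP.char_is_prime_or_zero C q with h | h
      · exfalso
        have hq0 : (q : C) = 0 := CharP.cast_eq_zero C q
        have hcop : p.Coprime q := (Nat.coprime_primes hp h).mpr (by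
          rintro rfl; exact hpC hq0)
        have h1 := Nat.Coprime.cast (R := C) hcop
        rw [hq0] at h1
        exact hpu (isCoprime_zero_right.mp h1)
      · subst h
        exact CharP.charP_to_charZero C

theorem sv_coeff {A : Type} [CommRing A] [IsDomain A] [IsLocalRing A] [IsNoetherianRing A]
    [IsAdicComplete (maximalIdeal A) A] : ∃ (C : Type) (_ : CommRing C) (φ : C →+* A) (π : C),
    SvCoeff A C φ π := by
  obtain ⟨p, hp⟩ := CharP.exists (ResidueField A)
  rcases CharP.char_is_prime_or_zero (ResidueField A) p with h | h
  · haveI : Fact p.Prime := ⟨h⟩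
    obtain ⟨C, π, hC⟩ := sv_coeff_charp (A := A) p (by
      rw [← residue_eq_zero_iff, map_natCast, CharP.cast_eq_zero])
    exact ⟨C, inferInstance, C.subtype, π, hC⟩
  · subst h
    haveI := CharP.charP_to_charZero (ResidueField A)
    let k := ResidueField A
    have hunit : ∀ y : nonZeroDivisors ℤ, IsUnit (Int.castRingHom A y) := by
      intro y
      by_contra h
      have h1 := (residue_eq_zero_iff _).mpr ((mem_maximalIdeal _).mpr h)
      rw [eq_intCast, map_intCast, Int.cast_eq_zero] at h1
      exact nonZeroDivisors.coe_ne_zero y h1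
    letI : Algebra ℚ A := (IsLocalization.lift (S := ℚ) hunit).toAlgebra
    haveI : Algebra.FormallySmooth ℚ k := by
      obtain ⟨ι, x, hx⟩ := exists_isTranscendenceBasis' ℚ k
      haveI := hx.isAlgebraic_field
      exact Algebra.FormallySmooth.of_algebraicIndependent_of_isSeparable hx.1
    let f : k →ₐ[ℚ] A ⧸ maximalIdeal A :=
      RingHom.toRatAlgHom (S := A ⧸ maximalIdeal A) (RingHom.id k : k →+* A ⧸ maximalIdeal A)
    obtain ⟨g, hg⟩ := Algebra.FormallySmooth.exists_mkₐ_comp_eq_of_isAdicComplete f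
    refine ⟨k, inferInstance, g.toRingHom, 0, inferInstance, inferInstance, inferInstance, ?_, ?_, ?_,
      Or.inl ⟨rfl, Field.toIsField k⟩⟩
    · rw [Ideal.span_singleton_zero]
      infer_instance
    · intro a
      refine ⟨Ideal.Quotient.mk _ a, ?_⟩
      rw [← Ideal.Quotient.eq]
      exact (DFunLike.congr_fun hg (Ideal.Quotient.mk _ a)).symm
    · rw [map_zero]
      exact zero_mem _

theorem sv_haus_transfer {S A M : Type} [CommRing S] [CommRing A] [Algebra S A] [AddCommGroup M]
    [Module S M] [Module A M] [IsScalarTower S A M] (I : Ideal S) (J : Ideal A)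
    (h : ∀ x ∈ I, algebraMap S A x ∈ J) [IsHausdorff J M] : IsHausdorff I M := by
  refine ⟨fun x hx => IsHausdorff.haus ‹IsHausdorff J M› x fun n => ?_⟩
  have h1 := hx n
  rw [SModEq.zero] at h1 ⊢
  have h2 : ∀ n, ∀ r ∈ I ^ n, algebraMap S A r ∈ J ^ n := by
    intro n r hr
    have h3 : (I ^ n).map (algebraMap S A) ≤ J ^ n := by
      rw [Ideal.map_pow]
      exact Ideal.pow_right_mono (Ideal.map_le_iff_le_comap.mpr h) n
    exact h3 (Ideal.mem_map_of_mem _ hr)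
  refine Submodule.smul_induction_on h1 (fun r hr y _ => ?_) (fun y z hy hz => add_mem hy hz)
  rw [← algebraMap_smul A r y]
  exact Submodule.smul_mem_smul (h2 n r hr) trivial

theorem sv_approx_pow {C A : Type} [CommRing C] [CommRing A] [IsLocalRing A] [IsNoetherianRing A]
    [Algebra C A] (hs : ∀ a : A, ∃ c, a - algebraMap C A c ∈ maximalIdeal A) (N : ℕ) :
    ∃ P : Submodule C A, P.FG ∧ ∀ a : A, ∃ b ∈ P, a - b ∈ maximalIdeal A ^ N := by
  induction N with
  | zero => exact ⟨⊥, Submodule.fg_bot, fun a => ⟨0, zero_mem _, by simp⟩⟩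
  | succ N ih =>
    obtain ⟨P, hP, h⟩ := ih
    obtain ⟨k, g, hg⟩ := Submodule.fg_iff_exists_fin_generating_family.mp
      (maximalIdeal A ^ N).fg_of_isNoetherianRing
    have hgm : ∀ i, g i ∈ maximalIdeal A ^ N := fun i => hg ▸ Submodule.subset_span ⟨i, rfl⟩
    refine ⟨P ⊔ Submodule.span C (Set.range g), hP.sup (Submodule.fg_span (Set.finite_range g)), ?_⟩
    intro a
    obtain ⟨b, hb, hab⟩ := h a
    have hab' := hab
    rw [← hg, Submodule.mem_span_range_iff_exists_fun] at hab'
    obtain ⟨e, he⟩ := hab'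
    choose c hc using hs
    refine ⟨b + ∑ i, c (e i) • g i, Submodule.add_mem_sup hb (Submodule.sum_mem _ fun i _ =>
      Submodule.smul_mem _ _ (Submodule.subset_span ⟨i, rfl⟩)), ?_⟩
    have : a - (b + ∑ i, c (e i) • g i) = ∑ i, (e i - algebraMap C A (c (e i))) * g i := by
      simp only [Algebra.smul_def, sub_mul, Finset.sum_sub_distrib]
      rw [← sub_sub, ← he]
      simp only [smul_eq_mul]
    rw [this, pow_succ']
    exact Ideal.sum_mem _ fun i _ => Ideal.mul_mem_mul (hc _) (hgm i)

theorem sv_finite_quot {C A : Type} [CommRing C] [CommRing A] [IsLocalRing A] [IsNoetherianRing A]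
    [Algebra C A] (hs : ∀ a : A, ∃ c, a - algebraMap C A c ∈ maximalIdeal A) (π : C) (J : Ideal A)
    [IsAdicComplete (Ideal.span {π}) C] (hJ : J ≤ maximalIdeal A)
    (hπ : algebraMap C A π ∈ maximalIdeal A) (N : ℕ)
    (hN : maximalIdeal A ^ N ≤ J ⊔ Ideal.span {algebraMap C A π}) : Module.Finite C (A ⧸ J) := by
  obtain ⟨P, hP, h⟩ := sv_approx_pow hs N
  haveI : IsHausdorff (maximalIdeal A) (A ⧸ J) := inferInstance
  haveI : IsHausdorff (Ideal.span {π}) (A ⧸ J) := sv_haus_transfer _ (maximalIdeal A) (by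
    intro x hx
    obtain ⟨y, rfl⟩ := Ideal.mem_span_singleton.mp hx
    rw [map_mul]
    exact Ideal.mul_mem_right _ _ hπ)
  let q : A →ₗ[C] A ⧸ J := (Ideal.Quotient.mkₐ C J).toLinearMap
  refine sv_finite_of_complete (Ideal.span {π}) ⟨{π}, by simp⟩ (P.map q) (hP.map q) ?_
  rw [eq_top_iff]
  rintro x -
  obtain ⟨a, rfl⟩ := Ideal.Quotient.mk_surjective x
  obtain ⟨b, hb, hab⟩ := h a
  obtain ⟨j, hj, z, hz, hjz⟩ := Submodule.mem_sup.mp (hN hab)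
  obtain ⟨y, rfl⟩ := Ideal.mem_span_singleton.mp hz
  have : Ideal.Quotient.mk J a = q b + π • Ideal.Quotient.mk J y := by
    change _ = Ideal.Quotient.mk J b + π • Ideal.Quotient.mk J y
    have e : π • Ideal.Quotient.mk J y = Ideal.Quotient.mk J (algebraMap C A π * y) := by
      rw [← Algebra.smul_def]
      rfl
    rw [e, ← map_add, Ideal.Quotient.eq]
    convert hj using 1
    linear_combination -hjz
  rw [this]
  exact Submodule.add_mem_sup (Submodule.mem_map_of_mem hb)
    (Submodule.smul_mem_smul (Ideal.mem_span_singleton_self π) trivial)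

theorem sv_finite_over {C S A : Type} [CommRing C] [CommRing S] [CommRing A] [Algebra C S]
    [Algebra S A] [Algebra C A] [IsScalarTower C S A] (I : Ideal S) (hfg : I.FG) [IsPrecomplete I S]
    [IsHausdorff I A] [Module.Finite C (A ⧸ I.map (algebraMap S A))] : Module.Finite S A := by
  obtain ⟨k, v, hv⟩ := Module.Finite.exists_fin (R := C) (M := A ⧸ I.map (algebraMap S A))
  choose w hw using fun i => Ideal.Quotient.mk_surjective (v i)
  refine sv_finite_of_complete I hfg (Submodule.span S (Set.range w))
    (Submodule.fg_span (Set.finite_range w)) ?_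
  rw [eq_top_iff]
  rintro a -
  have h1 : Ideal.Quotient.mk (I.map (algebraMap S A)) a ∈ Submodule.span C (Set.range v) :=
    hv ▸ trivial
  rw [Submodule.mem_span_range_iff_exists_fun] at h1
  obtain ⟨c, hc⟩ := h1
  have h2 : a - ∑ i, c i • w i ∈ I.map (algebraMap S A) := by
    rw [← Ideal.Quotient.eq, ← hc, map_sum]
    refine Finset.sum_congr rfl fun i _ => ?_
    rw [← hw i]
    rfl
  have h3 : a - ∑ i, c i • w i ∈ I • (⊤ : Submodule S A) := by
    rw [Ideal.smul_top_eq_map]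
    exact h2
  have : a = ∑ i, c i • w i + (a - ∑ i, c i • w i) := by ring
  rw [this]
  refine Submodule.add_mem_sup (Submodule.sum_mem _ fun i _ => ?_) h3
  rw [← algebraMap_smul S (c i) (w i)]
  exact Submodule.smul_mem _ _ (Submodule.subset_span ⟨i, rfl⟩)

theorem sv_dim_powerSeries (D : Type) [CommRing D] [IsNoetherianRing D] :
    ringKrullDim (PowerSeries D) ≤ ringKrullDim D + 1 := by
  have h := ringKrullDim_le_ringKrullDim_quotient_add_card ({PowerSeries.X} : Finset (PowerSeries D))
    (by
      have := IsAdicComplete.le_jacobson_bot (Ideal.span {(PowerSeries.X : PowerSeries D)})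
      rw [Finset.coe_singleton, Set.singleton_subset_iff]
      have := this (Ideal.mem_span_singleton_self _)
      rwa [Ideal.jacobson_bot] at this)
  refine h.trans ?_
  rw [Finset.card_singleton, Finset.coe_singleton]
  push_cast
  gcongr
  refine ringKrullDim_le_of_surjective ((Ideal.Quotient.mk _).comp PowerSeries.C) ?_
  intro x
  obtain ⟨f, rfl⟩ := Ideal.Quotient.mk_surjective x
  refine ⟨PowerSeries.constantCoeff f, ?_⟩
  rw [RingHom.comp_apply, Ideal.Quotient.eq, Ideal.mem_span_singleton, PowerSeries.X_dvd_iff]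
  simp

theorem sv_dim_mv (D : Type) [CommRing D] [IsNoetherianRing D] (n : ℕ) :
    ringKrullDim (MvPowerSeries (Fin n) D) ≤ ringKrullDim D + n := by
  induction n with
  | zero =>
    rw [ringKrullDim_eq_of_ringEquiv (MvPowerSeries.isEmptyEquiv (Fin 0) D).toRingEquiv]
    simp
  | succ n ih =>
    rw [ringKrullDim_eq_of_ringEquiv (MvPowerSeries.finSuccEquiv D n).toRingEquiv]
    refine (sv_dim_powerSeries _).trans ?_
    push_cast
    rw [← add_assoc]
    gcongr

theorem sv_dim_integral {S A : Type} [CommRing S] [CommRing A] [Algebra S A] [Algebra.IsIntegral S A] :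
    ringKrullDim A ≤ ringKrullDim S := by
  refine Order.krullDim_le_of_strictMono (PrimeSpectrum.comap (algebraMap S A)) ?_
  intro p q hpq
  haveI := p.2
  exact Ideal.IsIntegral.comap_lt_comap (R := S) hpq

theorem sv_params {A : Type} [CommRing A] [IsLocalRing A] [IsNoetherianRing A] (t : A)
    (ht : t ∈ maximalIdeal A) : ∃ (n : ℕ) (x : Fin n → A) (N : ℕ), (∀ i, x i ∈ maximalIdeal A) ∧
      maximalIdeal A ^ N ≤ Ideal.span (Set.range x) ⊔ Ideal.span {t} ∧
      ringKrullDim (A ⧸ Ideal.span {t}) = n := by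
  have hle : Ideal.span {t} ≤ maximalIdeal A := by
    rwa [Ideal.span_le, Set.singleton_subset_iff]
  haveI : Nontrivial (A ⧸ Ideal.span {t}) := Ideal.Quotient.nontrivial_iff.mpr fun h =>
    (maximalIdeal.isMaximal A).ne_top (top_le_iff.mp (h ▸ hle))
  haveI : IsLocalRing (A ⧸ Ideal.span {t}) :=
    IsLocalRing.of_surjective' (Ideal.Quotient.mk _) Ideal.Quotient.mk_surjective
  obtain ⟨s, hs, hc⟩ :=
    (maximalIdeal (A ⧸ Ideal.span {t})).exists_finset_card_eq_height_of_isNoetherianRing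
  let e := s.equivFin
  choose x hx using fun i => Ideal.Quotient.mk_surjective (I := Ideal.span {t}) ((e.symm i : s) : A ⧸ Ideal.span {t})
  have hrad : maximalIdeal (A ⧸ Ideal.span {t}) ≤ (Ideal.span (s : Set (A ⧸ Ideal.span {t}))).radical := by
    rw [Ideal.radical_eq_sInf]
    refine le_sInf ?_
    rintro p ⟨hp, hpp⟩
    exact hs.2 ⟨hpp, hp⟩ (IsLocalRing.le_maximalIdeal hpp.ne_top)
  obtain ⟨N, hN⟩ := Ideal.exists_pow_le_of_le_radical_of_fg hrad (Ideal.fg_of_isNoetherianRing _)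
  have hcm : (maximalIdeal (A ⧸ Ideal.span {t})).comap (Ideal.Quotient.mk (Ideal.span {t})) =
      maximalIdeal A := IsLocalRing.eq_maximalIdeal
    (Ideal.comap_isMaximal_of_surjective _ Ideal.Quotient.mk_surjective)
  have hmap : (maximalIdeal A).map (Ideal.Quotient.mk (Ideal.span {t})) ≤ maximalIdeal _ := by
    rw [Ideal.map_le_iff_le_comap]
    exact hcm.ge
  have hsp : Ideal.span (s : Set (A ⧸ Ideal.span {t})) =
      (Ideal.span (Set.range x)).map (Ideal.Quotient.mk (Ideal.span {t})) := by
    rw [Ideal.map_span, ← Set.range_comp]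
    congr 1
    ext y
    constructor
    · intro hy
      exact ⟨e ⟨y, hy⟩, by simp [hx]⟩
    · rintro ⟨i, rfl⟩
      simp [hx]
  refine ⟨s.card, x, N, fun i => ?_, ?_, ?_⟩
  · have : Ideal.Quotient.mk (Ideal.span {t}) (x i) ∈ maximalIdeal _ := by
      rw [hx]
      exact hs.1.2 (Ideal.subset_span (e.symm i).2)
    rw [← Ideal.mem_comap] at this
    rwa [hcm] at this
  · have h1 : (maximalIdeal A ^ N).map (Ideal.Quotient.mk (Ideal.span {t})) ≤
        (Ideal.span (Set.range x)).map (Ideal.Quotient.mk (Ideal.span {t})) := by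
      rw [Ideal.map_pow, ← hsp]
      exact (Ideal.pow_right_mono hmap N).trans hN
    rw [Ideal.map_le_iff_le_comap, Ideal.comap_map_quotientMk] at h1
    rwa [sup_comm]
  · rw [← IsLocalRing.maximalIdeal_height_eq_ringKrullDim, ← hc]
    rfl

theorem sv_N2_descend {S A : Type} [CommRing S] [IsDomain S] [CommRing A] [IsDomain A]
    [Algebra S A] [Module.Finite S A] (hinj : Function.Injective (algebraMap S A)) (h2 : SvN2 S) :
    Module.Finite A (integralClosure A (FractionRing A)) := by
  haveI : FaithfulSMul S A := (faithfulSMul_iff_algebraMap_injective S A).mpr hinj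
  let K := FractionRing S
  let L := FractionRing A
  letI : Algebra K L := FractionRing.liftAlgebra S L
  haveI : IsScalarTower S K L := FractionRing.isScalarTower_liftAlgebra S L
  haveI : FiniteDimensional K L := Module.Finite.of_isLocalization S A (nonZeroDivisors S)
  haveI := h2 K L
  let g : integralClosure S L →ₗ[S] integralClosure A L :=
    { toFun := fun x => ⟨x, x.2.tower_top⟩
      map_add' := fun x y => rfl
      map_smul' := fun r x => rfl }
  haveI : Module.Finite S (integralClosure A L) := Module.Finite.of_surjective g fun x =>
    ⟨⟨x, isIntegral_trans (R := S) (A := A) _ x.2⟩, rfl⟩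
  exact Module.Finite.of_restrictScalars_finite S A _

theorem sv_N2_coeff {A C : Type} [CommRing A] [IsLocalRing A] [CommRing C] {φ : C →+* A} {π : C}
    (h : SvCoeff A C φ π) (n : ℕ) : SvN2 (MvPowerSeries (Fin n) C) := by
  obtain ⟨h1, h2, h3, -, -, -, h4⟩ := h
  haveI := sv_mvPowerSeries_domain C n
  haveI := sv_mvPowerSeries_normal C n
  have key : CharZero C → SvN2 (MvPowerSeries (Fin n) C) := fun h => by
    haveI : CharZero (MvPowerSeries (Fin n) C) :=
      charZero_of_injective_algebraMap (MvPowerSeries.C_injective (σ := Fin n) (R := C))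
    exact sv_N2_charZero
  rcases h4 with ⟨-, hf⟩ | ⟨-, -, h⟩
  · obtain ⟨p, hp⟩ := CharP.exists C
    rcases CharP.char_is_prime_or_zero C p with h | h
    · haveI : Fact p.Prime := ⟨h⟩
      letI := hf.toField
      exact sv_N2_mvPowerSeries C p n
    · subst h
      exact key (CharP.charP_to_charZero C)
  · exact key h

theorem sv_complete_domain {A : Type} [CommRing A] [IsDomain A] [IsLocalRing A] [IsNoetherianRing A]
    [IsAdicComplete (maximalIdeal A) A] :
    Module.Finite A (integralClosure A (FractionRing A)) := by
  obtain ⟨C, _, φ, π, hC⟩ := sv_coeff (A := A)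
  have hC' := hC
  obtain ⟨c1, c2, c3, c4, c5, c6, c7⟩ := hC'
  obtain ⟨n, x, N, hx, hN, hdim⟩ := sv_params (φ π) c6
  obtain ⟨f, hfC, hfX⟩ := sv_exists_evalHom (maximalIdeal A) φ x hx
  let S := MvPowerSeries (Fin n) C
  haveI := sv_mvPowerSeries_domain C n
  letI : Algebra C A := φ.toAlgebra
  letI : Algebra S A := f.toAlgebra
  haveI : IsScalarTower C S A := IsScalarTower.of_algebraMap_eq fun c => (hfC c).symm
  let I : Ideal S := Ideal.span (Set.range MvPowerSeries.X)
  have hI : I.map (algebraMap S A) = Ideal.span (Set.range x) := by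
    rw [Ideal.map_span, ← Set.range_comp]
    congr 2
    ext i
    exact hfX i
  have hxm : Ideal.span (Set.range x) ≤ maximalIdeal A := by
    rw [Ideal.span_le]
    rintro _ ⟨i, rfl⟩
    exact hx i
  haveI : Module.Finite C (A ⧸ I.map (algebraMap S A)) := by
    rw [hI]
    exact sv_finite_quot c5 π _ hxm c6 N hN
  haveI : IsHausdorff I A := sv_haus_transfer I (maximalIdeal A) fun r hr =>
    hxm (hI ▸ Ideal.mem_map_of_mem _ hr)
  haveI : Module.Finite S A := sv_finite_over (C := C) I
    (Submodule.fg_span (Set.finite_range _))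
  have hSA : ringKrullDim S ≤ ringKrullDim A := by
    refine (sv_dim_mv C n).trans ?_
    rw [← hdim]
    rcases c7 with ⟨-, hf⟩ | ⟨h1, h2, -⟩
    · rw [ringKrullDim_eq_zero_of_isField hf, zero_add]
      exact ringKrullDim_quotient_le _
    · refine le_trans ?_ (ringKrullDim_quotient_succ_le_of_nonZeroDivisor
        (mem_nonZeroDivisors_of_ne_zero h1))
      rw [add_comm]
      gcongr
  have hinj : Function.Injective (algebraMap S A) := by
    rw [injective_iff_map_eq_zero]
    intro r hr
    by_contra hr0
    have h1 : ringKrullDim f.range + 1 ≤ ringKrullDim S := ringKrullDim_succ_le_of_surjective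
      f.rangeRestrict f.rangeRestrict_surjective (mem_nonZeroDivisors_of_ne_zero hr0)
      (Subtype.ext hr)
    haveI : Algebra.IsIntegral f.range A := ⟨fun a => by
      obtain ⟨p, hp, hpa⟩ := (Algebra.IsIntegral.isIntegral (R := S) a)
      refine ⟨p.map f.rangeRestrict, hp.map _, ?_⟩
      rw [Polynomial.eval₂_map]
      exact hpa⟩
    have h2 : ringKrullDim A ≤ ringKrullDim f.range := sv_dim_integral
    have h3 : ringKrullDim A + 1 ≤ ringKrullDim A := by
      calc _ ≤ ringKrullDim f.range + 1 := by gcongr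
        _ ≤ _ := h1.trans hSA
    have h4 := ringKrullDim_ne_top (R := A)
    have h5 := ringKrullDim_ne_bot (R := A)
    generalize ringKrullDim A = d at h3 h4 h5
    induction d with
    | bot => exact h5 rfl
    | coe d =>
      induction d with
      | top => exact h4 rfl
      | coe d =>
        have : d + 1 ≤ d := by exact_mod_cast h3
        omega
  exact sv_N2_descend hinj (sv_N2_coeff hC n)

theorem sv_quot_complete {A : Type} [CommRing A] [IsLocalRing A] [IsNoetherianRing A]
    [IsAdicComplete (maximalIdeal A) A] (P : Ideal A) [IsLocalRing (A ⧸ P)] :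
    IsAdicComplete (maximalIdeal (A ⧸ P)) (A ⧸ P) := by
  have hcm : (maximalIdeal (A ⧸ P)).comap (Ideal.Quotient.mk P) = maximalIdeal A :=
    IsLocalRing.eq_maximalIdeal (Ideal.comap_isMaximal_of_surjective _ Ideal.Quotient.mk_surjective)
  have hmap : maximalIdeal (A ⧸ P) = (maximalIdeal A).map (Ideal.Quotient.mk P) := by
    rw [← hcm, Ideal.map_comap_of_surjective _ Ideal.Quotient.mk_surjective]
  haveI : IsHausdorff (maximalIdeal (A ⧸ P)) (A ⧸ P) := inferInstance
  refine { prec' := fun f hf => ?_ }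
  have h1 : ∀ n, ∃ d ∈ maximalIdeal A ^ n, Ideal.Quotient.mk P d = f n - f (n + 1) := fun n => by
    have := hf (Nat.le_succ n)
    rw [SModEq.sub_mem, smul_eq_mul, Ideal.mul_top, hmap, ← Ideal.map_pow] at this
    exact (Ideal.mem_map_iff_of_surjective _ Ideal.Quotient.mk_surjective).mp this
  choose d hd hdf using h1
  obtain ⟨a, ha⟩ := Ideal.Quotient.mk_surjective (f 0)
  have hs : ∀ n, Ideal.Quotient.mk P (a - ∑ i ∈ Finset.range n, d i) = f n := by
    intro n
    induction n with
    | zero => simpa using ha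
    | succ n ih =>
      rw [Finset.sum_range_succ, ← sub_sub, map_sub, ih, hdf]
      ring
  obtain ⟨L, hL⟩ := sv_limit (maximalIdeal A) 0 (fun n => a - ∑ i ∈ Finset.range n, d i) (fun n => by
    rw [Finset.sum_range_succ, zero_add]
    convert hd n using 1
    ring)
  refine ⟨Ideal.Quotient.mk P L, fun n => ?_⟩
  have := hL n
  rw [zero_add] at this
  rw [SModEq.sub_mem, smul_eq_mul, Ideal.mul_top, hmap, ← Ideal.map_pow, ← hs n, ← map_sub]
  exact Ideal.mem_map_of_mem _ this

theorem sv_quot_prime_finite {A : Type} [CommRing A] [IsLocalRing A] [IsNoetherianRing A]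
    [IsAdicComplete (maximalIdeal A) A] (P : Ideal A) [P.IsPrime] :
    IsNoetherian A (integralClosure (A ⧸ P) (FractionRing (A ⧸ P))) := by
  haveI : IsLocalRing (A ⧸ P) :=
    IsLocalRing.of_surjective' (Ideal.Quotient.mk _) Ideal.Quotient.mk_surjective
  haveI := sv_quot_complete P
  haveI := sv_complete_domain (A := A ⧸ P)
  haveI : Module.Finite A (integralClosure (A ⧸ P) (FractionRing (A ⧸ P))) :=
    Module.Finite.trans (A ⧸ P) _
  exact isNoetherian_of_isNoetherianRing_of_finite A _

theorem sv_contract (R : Type) [CommRing R] [IsLocalRing R] [IsNoetherianRing R] (I : Ideal R) (a : R)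
    (h : algebraMap R (AdicCompletion (maximalIdeal R) R) a ∈
      I.map (algebraMap R (AdicCompletion (maximalIdeal R) R))) : a ∈ I := by
  haveI : IsHausdorff (maximalIdeal R) (R ⧸ I) := inferInstance
  rw [← Ideal.Quotient.eq_zero_iff_mem]
  refine IsHausdorff.haus this _ fun n => ?_
  rw [SModEq.zero]
  have h1 := Ideal.mem_map_of_mem (AdicCompletion.evalₐ (maximalIdeal R) n).toRingHom h
  rw [Ideal.map_map] at h1
  have e : (AdicCompletion.evalₐ (maximalIdeal R) n).toRingHom.comp
     (algebraMap R (AdicCompletion (maximalIdeal R) R)) = Ideal.Quotient.mk (maximalIdeal R ^ n) := by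
    ext r
    exact AlgHom.commutes (AdicCompletion.evalₐ (maximalIdeal R) n) r
  rw [← RingHom.comp_apply, e] at h1
  have h2 : a ∈ (I.map (Ideal.Quotient.mk (maximalIdeal R ^ n))).comap
    (Ideal.Quotient.mk (maximalIdeal R ^ n)) := h1
  rw [Ideal.comap_map_quotientMk] at h2
  obtain ⟨x, hx, y, hy, rfl⟩ := Submodule.mem_sup.mp h2
  rw [map_add, Ideal.Quotient.eq_zero_iff_mem.mpr hy, add_zero]
  have : Ideal.Quotient.mk I x = x • (1 : R ⧸ I) := by
    rw [Algebra.smul_def, mul_one]; rfl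
  rw [this]
  exact Submodule.smul_mem_smul hx trivial

theorem sv_descent {R A V Q : Type} [CommRing R] [CommRing A] [CommRing V] [CommRing Q] [Algebra R A]
    [Algebra A V] [Algebra R Q] [IsLocalization (nonZeroDivisors R) Q]
    (hinj : ∀ a : A, algebraMap A V a = 0 → a = 0)
    (ψ : Q →+* V) (hψ : ∀ r, ψ (algebraMap R Q r) = algebraMap A V (algebraMap R A r))
    (hcon : ∀ (I : Ideal R) (a : R), algebraMap R A a ∈ I.map (algebraMap R A) → a ∈ I)
    (W : Submodule A V) [IsNoetherian A W] (N : Submodule R Q) (hN : ∀ y ∈ N, ψ y ∈ W) : N.FG := by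
  have h1 : (Submodule.span A (ψ '' N)).FG := by
    refine Submodule.FG.of_le_of_isNoetherian (T := W) ?_
    rw [Submodule.span_le]
    rintro _ ⟨y, hy, rfl⟩
    exact hN y hy
  rw [Submodule.fg_span_iff_fg_span_finset_subset] at h1
  obtain ⟨t, htN, ht⟩ := h1
  classical
  have htN' : ∀ z ∈ t, ∃ q ∈ N, ψ q = z := fun z hz => htN hz
  choose! g hgN hg using htN'
  let u : Finset Q := t.image g
  refine ⟨u, le_antisymm ?_ ?_⟩
  · rw [Submodule.span_le]
    intro y hy
    obtain ⟨z, hz, rfl⟩ := Finset.mem_image.mp (Finset.mem_coe.mp hy)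
    exact hgN z hz
  · intro y hy
    obtain ⟨s, hs⟩ := IsLocalization.exist_integer_multiples_of_finset (nonZeroDivisors R) (insert y u)
    have hy1 := hs y (Finset.mem_insert_self _ _)
    have hu1 : ∀ z ∈ t, ∃ b, algebraMap R Q b = (s : R) • g z := fun z hz =>
      hs (g z) (Finset.mem_insert_of_mem (Finset.mem_image_of_mem _ hz))
    obtain ⟨a, ha⟩ := hy1
    choose! b hb using hu1
    have h2 : ψ y ∈ Submodule.span A (t : Set V) := ht ▸ Submodule.subset_span ⟨y, hy, rfl⟩
    rw [Submodule.mem_span_finset] at h2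
    obtain ⟨c, -, hc⟩ := h2
    have hsm : ∀ q : Q, ψ ((s : R) • q) = algebraMap A V (algebraMap R A s) * ψ q := fun q => by
      rw [Algebra.smul_def, map_mul, hψ]
    have h3 : algebraMap R A a = ∑ z ∈ t, c z * algebraMap R A (b z) := by
      rw [← sub_eq_zero]
      apply hinj
      rw [map_sub, ← hψ, ha, hsm, ← hc, Finset.mul_sum, map_sum, sub_eq_zero]
      refine Finset.sum_congr rfl fun z hz => ?_
      rw [map_mul, ← hψ (b z), hb z hz, hsm, hg z hz, Algebra.smul_def]
      ring
    have h4 : a ∈ Ideal.span (b '' t) := by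
      apply hcon
      rw [h3]
      exact Ideal.sum_mem _ fun z hz => Ideal.mul_mem_left _ _
        (Ideal.mem_map_of_mem _ (Ideal.subset_span ⟨z, hz, rfl⟩))
    obtain ⟨d, hd⟩ := (Submodule.mem_span_image_finset_iff_exists_fun' R).mp h4
    have h5 : y = ∑ z ∈ t, d z • g z := by
      have hu : IsUnit (algebraMap R Q s) := IsLocalization.map_units Q s
      apply hu.mul_left_cancel
      rw [← Algebra.smul_def, ← Algebra.smul_def, ← ha, ← hd, map_sum, Finset.smul_sum]
      refine Finset.sum_congr rfl fun z hz => ?_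
      rw [smul_comm, ← hb z hz, smul_eq_mul, map_mul, Algebra.smul_def]
    rw [h5]
    exact Submodule.sum_mem _ fun z hz => Submodule.smul_mem _ _
      (Submodule.subset_span (Finset.mem_coe.mpr (Finset.mem_image_of_mem _ hz)))

theorem sv_finite (R : Type) [CommRing R] [IsLocalRing R] [IsNoetherianRing R]
    (hau : IsReduced (AdicCompletion (maximalIdeal R) R)) :
    Module.Finite R (integralClosure R (FractionRing R)) := by
  let A := AdicCompletion (maximalIdeal R) R
  haveI : IsReduced A := hau
  haveI : IsNoetherianRing A := sv_completion_noeth R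
  haveI : IsAdicComplete (maximalIdeal A) A := inferInstance
  let ι := minimalPrimes A
  haveI : Finite ι := minimalPrimes.finite_of_isNoetherianRing A
  haveI hpr : ∀ P : ι, (P : Ideal A).IsPrime := fun P => P.2.1.1
  let F : ι → Type := fun P => FractionRing (A ⧸ (P : Ideal A))
  let V := ∀ P : ι, F P
  let B : ι → Type := fun P => integralClosure (A ⧸ (P : Ideal A)) (F P)
  haveI : ∀ P : ι, IsNoetherian A (B P) := fun P => sv_quot_prime_finite (P : Ideal A)
  have hinj : ∀ a : A, algebraMap A V a = 0 → a = 0 := by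
    intro a ha
    have h1 : a ∈ nilradical A := by
      rw [nilradical, ← Ideal.sInf_minimalPrimes, Submodule.mem_sInf]
      intro P hP
      have h2 : algebraMap (A ⧸ P) (FractionRing (A ⧸ P)) (Ideal.Quotient.mk P a) = 0 :=
        congrFun ha ⟨P, hP⟩
      haveI : Ideal.IsPrime P := hP.1.1
      rwa [map_eq_zero_iff _ (IsFractionRing.injective _ _), Ideal.Quotient.eq_zero_iff_mem] at h2
    rwa [nilradical_eq_zero, Ideal.zero_eq_bot, Ideal.mem_bot] at h1
  have hunit : ∀ s : nonZeroDivisors R, IsUnit (((algebraMap A V).comp (algebraMap R A)) s) := by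
    intro s
    rw [Pi.isUnit_iff]
    intro P
    rw [isUnit_iff_ne_zero]
    change algebraMap (A ⧸ (P : Ideal A)) (F P) (Ideal.Quotient.mk _ (algebraMap R A s)) ≠ 0
    rw [Ne, map_eq_zero_iff _ (IsFractionRing.injective _ _), Ideal.Quotient.eq_zero_iff_mem]
    intro h
    have hreg : algebraMap R A s ∈ nonZeroDivisors A := by
      have h3 : IsSMulRegular A (s : R) := Module.Flat.isSMulRegular_of_nonZeroDivisors s.2
      rw [mem_nonZeroDivisors_iff_right]
      intro x hx
      apply h3
      change (s : R) • x = (s : R) • 0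
      rw [Algebra.smul_def, mul_comm, hx, smul_zero]
    exact Set.disjoint_left.mp (Ideal.disjoint_nonZeroDivisors_of_mem_minimalPrimes P.2) h hreg
  let ψ : FractionRing R →+* V := IsLocalization.lift hunit
  have hψ : ∀ r, ψ (algebraMap R _ r) = algebraMap A V (algebraMap R A r) := fun r =>
    IsLocalization.lift_eq hunit r
  let j : (∀ P : ι, B P) →ₗ[A] V := LinearMap.pi fun P =>
    ((integralClosure (A ⧸ (P : Ideal A)) (F P)).val.toLinearMap.restrictScalars A).comp
      (LinearMap.proj P)
  refine (Module.Finite.iff_fg (N := Subalgebra.toSubmodule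
    (integralClosure R (FractionRing R)))).mpr ?_
  refine sv_descent hinj ψ hψ (sv_contract R) (LinearMap.range j)
    (Subalgebra.toSubmodule (integralClosure R (FractionRing R))) ?_
  intro y hy
  refine ⟨fun P => ⟨ψ y P, ?_⟩, rfl⟩
  obtain ⟨p, hp, hpy⟩ := hy
  let θ : R →+* A ⧸ (P : Ideal A) := (Ideal.Quotient.mk _).comp (algebraMap R A)
  refine ⟨p.map θ, hp.map _, ?_⟩
  have h1 := congrArg (fun q => (Pi.evalRingHom F P) (ψ q)) hpy
  simp only [Polynomial.hom_eval₂, map_zero] at h1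
  rw [Polynomial.eval₂_map]
  refine (congrArg (fun f => Polynomial.eval₂ f (ψ y P) p) (RingHom.ext fun r => ?_)).trans h1
  exact (congrFun (hψ r) P).symm

theorem sv_reflexive (R : Type) [CommRing R] [IsNoetherianRing R]
    [Module.Finite R (integralClosure R (FractionRing R))] :
    Module.IsReflexive R (integralClosure R (FractionRing R)) := by
  let Q := FractionRing R
  let B := integralClosure R Q
  have hQ : Function.Injective (algebraMap R Q) := IsFractionRing.injective R Q
  -- common denominator
  obtain ⟨s, hs⟩ : ∃ s : nonZeroDivisors R, ∀ x : B, ∃ r : R, algebraMap R Q r = algebraMap R Q s * x := by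
    obtain ⟨k, v, hv⟩ := Module.Finite.exists_fin (R := R) (M := B)
    obtain ⟨s, h⟩ := IsLocalization.exist_integer_multiples_of_finite (nonZeroDivisors R)
      (fun i => (v i : Q))
    refine ⟨s, fun x => ?_⟩
    have hx : x ∈ Submodule.span R (Set.range v) := hv ▸ trivial
    rw [Submodule.mem_span_range_iff_exists_fun] at hx
    obtain ⟨c, rfl⟩ := hx
    choose b hb using h
    refine ⟨∑ i, c i * b i, ?_⟩
    rw [map_sum, AddSubmonoidClass.coe_finset_sum, Finset.mul_sum]
    refine Finset.sum_congr rfl fun i _ => ?_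
    rw [map_mul, hb, SetLike.val_smul, Algebra.smul_def, Algebra.smul_def]
    ring
  have hsu : IsUnit (algebraMap R Q s) := IsLocalization.map_units Q s
  choose m hm using hs
  let μ : Module.Dual R B :=
    { toFun := m
      map_add' := fun x y => hQ (by
        rw [map_add, hm, hm, hm, Subalgebra.coe_add, mul_add])
      map_smul' := fun r x => hQ (by
        rw [smul_eq_mul, RingHom.id_apply, map_mul, hm, hm, SetLike.val_smul, Algebra.smul_def]
        ring) }
  have hμ : ∀ x, algebraMap R Q (μ x) = algebraMap R Q s * x := hm
  have key : ∀ (g : Module.Dual R B) (x : B), algebraMap R Q (g x) = x * algebraMap R Q (g 1) := by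
    intro g x
    apply hsu.mul_left_cancel
    rw [← mul_assoc, ← hμ x, ← map_mul, ← map_mul]
    congr 1
    rw [← smul_eq_mul, ← smul_eq_mul, ← map_smul, ← map_smul]
    congr 1
    apply Subtype.ext
    rw [SetLike.val_smul, SetLike.val_smul, Algebra.smul_def, Algebra.smul_def, hμ]
    simp
  refine ⟨⟨?_, ?_⟩⟩
  · rw [injective_iff_map_eq_zero]
    intro x hx
    have h1 : μ x = 0 := LinearMap.congr_fun hx μ
    have h2 := hμ x
    rw [h1, map_zero] at h2
    exact Subtype.ext (hsu.mul_left_cancel (by rw [← h2]; simp))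
  · intro Φ
    obtain ⟨q, hq⟩ : ∃ q : Q, algebraMap R Q s * q = algebraMap R Q (Φ μ) := by
      obtain ⟨u, hu⟩ := hsu
      exact ⟨↑u⁻¹ * algebraMap R Q (Φ μ), by rw [← hu]; simp⟩
    have hΦ : ∀ g, algebraMap R Q (Φ g) = q * algebraMap R Q (g 1) := by
      intro g
      apply hsu.mul_left_cancel
      rw [← mul_assoc, hq, ← map_mul, ← map_mul]
      congr 1
      rw [mul_comm (Φ μ), ← smul_eq_mul, ← smul_eq_mul, ← map_smul, ← map_smul]
      congr 1
      ext x
      apply hQ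
      simp only [LinearMap.smul_apply, smul_eq_mul, map_mul]
      rw [key g x, hμ]
      ring
    let e1 : Module.Dual R B →ₗ[R] R := LinearMap.applyₗ (1 : B)
    let c : Submodule R Q := (LinearMap.range e1).map (Algebra.linearMap R Q)
    have hcfg : c.FG := (IsNoetherian.noetherian (LinearMap.range e1)).map _
    have hqint : IsIntegral R q := by
      have hqc : ∀ z ∈ c, q * z ∈ c := by
        rintro _ ⟨_, ⟨g, rfl⟩, rfl⟩
        let g' : Module.Dual R B :=
          { toFun := fun x => Φ (g.comp (LinearMap.mulLeft R x))
            map_add' := fun x y => by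
              rw [← map_add]
              congr 1
              ext z
              simp [add_mul]
            map_smul' := fun r x => by
              rw [RingHom.id_apply, ← map_smul]
              congr 1
              ext z
              simp }
        refine ⟨_, ⟨g', rfl⟩, ?_⟩
        change algebraMap R Q (Φ (g.comp (LinearMap.mulLeft R 1))) = q * algebraMap R Q (g 1)
        rw [hΦ]
        simp
      let f : c →ₗ[R] c := (LinearMap.mulLeft R q).restrict hqc
      haveI : Module.Finite R c := Module.Finite.iff_fg.mpr hcfg
      obtain ⟨p, hp, hpf⟩ := LinearMap.exists_monic_and_aeval_eq_zero R f
      have hval : ∀ (p : Polynomial R) (z : c), ((Polynomial.aeval f p z : c) : Q) =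
          Polynomial.aeval q p * z := by
        intro p
        induction p using Polynomial.induction_on' with
        | add p1 p2 h1 h2 =>
          intro z
          rw [map_add, map_add, LinearMap.add_apply, Submodule.coe_add, h1, h2, add_mul]
        | monomial n a =>
          intro z
          have hpow : ∀ n, (((f ^ n) z : c) : Q) = q ^ n * z := by
            intro n
            induction n with
            | zero => simp
            | succ n ih =>
              rw [pow_succ', Module.End.mul_apply, pow_succ', mul_assoc, ← ih]
              rfl
          rw [Polynomial.aeval_monomial, Polynomial.aeval_monomial, Module.End.mul_apply,
            Module.algebraMap_end_apply, Submodule.coe_smul, hpow, Algebra.smul_def, mul_assoc]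
      refine ⟨p, hp, ?_⟩
      have hsc : algebraMap R Q (μ 1) ∈ c := ⟨_, ⟨μ, rfl⟩, rfl⟩
      have h1 : (0 : Q) = Polynomial.aeval q p * algebraMap R Q (μ 1) := by
        have h2 := hval p ⟨_, hsc⟩
        rwa [hpf, LinearMap.zero_apply, Submodule.coe_zero] at h2
      apply hsu.mul_right_cancel
      rw [hμ] at h1
      simpa [Polynomial.aeval_def] using h1.symm
    refine ⟨⟨q, hqint⟩, ?_⟩
    ext g
    apply hQ
    rw [hΦ, Module.Dual.eval_apply, key]

-- STATEMENT 5
theorem stmt5 (R : Type) [CommRing R] [IsLocalRing R] [IsNoetherianRing R]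
    (hau : AnalyticallyUnramified R) (hS2 : SerreS2 R) :
    Module.IsReflexive R (IntClosure R) := by
  have := sv_finite R hau
  exact sv_reflexive R
end
end

section
/- Let (R, m) be a 2-dimensional analytically unramified Noetherian local ring satisfying Serre's condition (R1) (R_p is regular for every prime p of height ≤ 1) and with m · H^1_m(R) = 0 (e.g. R Buchsbaum). If the first Bass number μ^1(m, R) := dim_{R/m} Ext^1_R(R/m, R) satisfies μ^1(m, R) ≤ 1, then the integral closure R̄ of R in its total ring of fractions is a reflexive R-module. -/
open CategoryTheory IsLocalRing

set_option synthInstance.maxHeartbeats 1000000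
set_option maxHeartbeats 1000000

noncomputable section

namespace S7
open Limits

abbrev FF (R : Type) [CommRing R] (Y : ModuleCat.{0} R) :
    ModuleCat.{0} R ⥤ (ModuleCat.{0} R)ᵒᵖ :=
  ((linearYoneda R (ModuleCat.{0} R)).obj Y).rightOp

abbrev E1 {R : Type} [CommRing R] (X Y : ModuleCat.{0} R) : ModuleCat.{0} R :=
  ((Ext R (ModuleCat.{0} R) 1).obj (Opposite.op X)).obj Y

abbrev KK {R : Type} [CommRing R] {X : ModuleCat.{0} R} (P : ProjectiveResolution X)
    (Y : ModuleCat.{0} R) : ChainComplex (ModuleCat.{0} R)ᵒᵖ ℕ :=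
  ((FF R Y).mapHomologicalComplex _).obj P.complex

def pU {R : Type} [CommRing R] {X : ModuleCat.{0} R} (P : ProjectiveResolution X)
    (Y : ModuleCat.{0} R) : ((KK P Y).opcycles 1).unop ⟶ ModuleCat.of R (P.complex.X 1 ⟶ Y) :=
  ((KK P Y).pOpcycles 1).unop

def isoP {R : Type} [CommRing R] {X : ModuleCat.{0} R} (P : ProjectiveResolution X)
    (Y : ModuleCat.{0} R) : ((FF R Y).leftDerived 1).obj X ≅ (KK P Y).homology 1 :=
  P.isoLeftDerivedObj (FF R Y) 1

def pi0 {R : Type} [CommRing R] {X : ModuleCat.{0} R} (P : ProjectiveResolution X) :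
    P.complex.X 0 ⟶ X := P.π.f 0

def qU {R : Type} [CommRing R] {X : ModuleCat.{0} R} (P : ProjectiveResolution X)
    (Y : ModuleCat.{0} R) : ((KK P Y).opcycles 1).unop ⟶ E1 X Y :=
  ((isoP P Y).hom ≫ (KK P Y).homologyι 1).unop

def Rep {R : Type} [CommRing R] {X Y : ModuleCat.{0} R} (P : ProjectiveResolution X)
    (k : P.complex.X 1 ⟶ Y) (x : E1 X Y) : Prop :=
  ∃ z : ((KK P Y).opcycles 1).unop, (pU P Y).hom z = k ∧ (qU P Y).hom z = x

variable {R : Type} [CommRing R] {X Y : ModuleCat.{0} R} (P : ProjectiveResolution X)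

lemma Rep.add {k k' : P.complex.X 1 ⟶ Y} {x x' : E1 X Y} (h : Rep P k x) (h' : Rep P k' x') :
    Rep P (k + k') (x + x') := by
  obtain ⟨z, rfl, rfl⟩ := h
  obtain ⟨z', rfl, rfl⟩ := h'
  exact ⟨z + z', by rw [map_add], by rw [map_add]⟩

lemma Rep.smul (a : R) {k : P.complex.X 1 ⟶ Y} {x : E1 X Y} (h : Rep P k x) :
    Rep P (a • k) (a • x) := by
  obtain ⟨z, rfl, rfl⟩ := h
  exact ⟨a • z, by rw [map_smul], by rw [map_smul]⟩

lemma Rep.exists_of_cocycle (k : P.complex.X 1 ⟶ Y) (hk : P.complex.d 2 1 ≫ k = 0) :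
    ∃ x : E1 X Y, Rep P k x := by
  have h0 : (KK P Y).d 2 1 ≫ (KK P Y).pOpcycles 1 = 0 := HomologicalComplex.d_pOpcycles _ _ _
  let S : ShortComplex (ModuleCat.{0} R)ᵒᵖ := ShortComplex.mk _ _ h0
  have hS : S.Exact := S.exact_of_g_is_cokernel
    ((KK P Y).opcyclesIsCokernel 2 1 (by simp))
  have := (ShortComplex.moduleCat_exact_iff _).1 hS.unop k hk
  obtain ⟨z, hz⟩ := this
  exact ⟨(qU P Y).hom z, z, hz, rfl⟩

lemma Rep.exists_rep (x : E1 X Y) : ∃ k : P.complex.X 1 ⟶ Y, Rep P k x := by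
  have : Epi (qU P Y) := by
    have : Mono ((isoP P Y).hom ≫ (KK P Y).homologyι 1) := inferInstance
    exact unop_epi_of_mono _
  obtain ⟨z, hz⟩ := (ModuleCat.epi_iff_surjective _).1 this x
  exact ⟨(pU P Y).hom z, z, rfl, hz⟩

lemma Rep.coboundary {k : P.complex.X 1 ⟶ Y} (h : Rep P k 0) :
    ∃ ψ : P.complex.X 0 ⟶ Y, P.complex.d 1 0 ≫ ψ = k := by
  obtain ⟨z, rfl, hz⟩ := h
  let S : ShortComplex (ModuleCat.{0} R)ᵒᵖ :=
    ShortComplex.mk _ _ ((KK P Y).homologyι_comp_fromOpcycles 1 0)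
  have hS : S.Exact := S.exact_of_f_is_kernel
    ((KK P Y).homologyIsKernel 1 0 (by simp))
  have hz' : ((KK P Y).homologyι 1).unop.hom z = 0 := by
    have : Function.Injective (isoP P Y).hom.unop.hom :=
      (ModuleCat.mono_iff_injective _).1 inferInstance
    apply this
    rw [map_zero]
    exact hz
  obtain ⟨ψ, hψ⟩ := (ShortComplex.moduleCat_exact_iff _).1 hS.unop z hz'
  refine ⟨ψ, ?_⟩
  rw [← hψ]
  have := (KK P Y).p_fromOpcycles 1 0
  have := congrArg (fun t => t.unop.hom ψ) this
  exact this.symm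

lemma Rep.naturality {X' : ModuleCat.{0} R} {P} (Q : ProjectiveResolution X') (f : X ⟶ X')
    (g : P.complex ⟶ Q.complex) (w : g.f 0 ≫ pi0 Q = pi0 P ≫ f)
    {k : Q.complex.X 1 ⟶ Y} {x : E1 X' Y} (h : Rep Q k x) :
    Rep P (g.f 1 ≫ k) ((((Ext R (ModuleCat.{0} R) 1).map f.op).app Y).hom x) := by
  obtain ⟨z, rfl, rfl⟩ := h
  refine ⟨(HomologicalComplex.opcyclesMap
    (((FF R Y).mapHomologicalComplex _).map g) 1).unop.hom z, ?_, ?_⟩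
  · have := HomologicalComplex.p_opcyclesMap (((FF R Y).mapHomologicalComplex _).map g) 1
    exact congrArg (fun t => t.unop.hom z) this
  · have : ((FF R Y).leftDerived 1).map f ≫ (isoP Q Y).hom = (isoP P Y).hom ≫
      HomologicalComplex.homologyMap (((FF R Y).mapHomologicalComplex _).map g) 1 :=
      ProjectiveResolution.isoLeftDerivedObj_hom_naturality f P Q g w (FF R Y) 1
    have h2 := HomologicalComplex.homologyι_naturality (((FF R Y).mapHomologicalComplex _).map g) 1
    have h3 : ((isoP P Y).hom ≫ (KK P Y).homologyι 1) ≫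
      HomologicalComplex.opcyclesMap (((FF R Y).mapHomologicalComplex _).map g) 1 =
      ((FF R Y).leftDerived 1).map f ≫
        ((isoP Q Y).hom ≫ (KK Q Y).homologyι 1) := by
      rw [Category.assoc, ← h2, reassoc_of% this]
    exact congrArg (fun t => t.unop.hom z) h3

lemma Rep.zero : Rep P (0 : P.complex.X 1 ⟶ Y) 0 :=
  ⟨0, by rw [map_zero], by rw [map_zero]⟩

lemma Rep.unique {k : P.complex.X 1 ⟶ Y} {x y : E1 X Y} (h : Rep P k x) (h' : Rep P k y) :
    x = y := by
  obtain ⟨z, hz, rfl⟩ := h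
  obtain ⟨z', hz', rfl⟩ := h'
  have : Mono (pU P Y) := unop_mono_of_epi ((KK P Y).pOpcycles 1)
  have := (ModuleCat.mono_iff_injective _).1 this (hz.trans hz'.symm)
  rw [this]

/-- An element annihilating `X` annihilates `Ext¹(X, Y)`. -/
lemma smul_E1_eq_zero (a : R) (ha : ∀ t : X, a • t = 0) (x : E1 X Y) : a • x = 0 := by
  let P := projectiveResolution X
  obtain ⟨k, hk⟩ := Rep.exists_rep P x
  let g : P.complex ⟶ P.complex := a • 𝟙 P.complex
  have h2 := Rep.naturality (P := P) P (0 : X ⟶ X) g (by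
    ext t
    simp [g, ha]) hk
  have h3 : g.f 1 ≫ k = a • k := by simp [g]
  rw [h3] at h2
  have h4 := Rep.naturality (P := P) P (0 : X ⟶ X) 0 (by simp) hk
  have h5 : (0 : P.complex ⟶ P.complex).f 1 ≫ k = 0 := by simp
  rw [h5] at h4
  rw [Rep.unique P (hk.smul P a) h2, Rep.unique P h4 (Rep.zero P)]

/-- The basic lemma: `φ : J → R` gives a class in `Ext¹(R/J, R)`; if its image in `Ext¹(R/I, R)`
vanishes then `φ` restricted to `I` is multiplication by an element. -/
lemma exists_lift (J : Ideal R) : ∃ (P : ProjectiveResolution (ModuleCat.of R (R ⧸ J)))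
    (σ : P.complex.X 0 ⟶ ModuleCat.of R R) (τ : P.complex.X 1 →ₗ[R] J),
    (∀ p, Ideal.Quotient.mk J (σ.hom p) = (pi0 P).hom p) ∧
    (∀ p, (τ p : R) = σ.hom ((P.complex.d 1 0).hom p)) := by
  let P := projectiveResolution (ModuleCat.of R (R ⧸ J))
  let q : ModuleCat.of R R ⟶ ModuleCat.of R (R ⧸ J) := ModuleCat.ofHom J.mkQ
  have : Epi q := (ModuleCat.epi_iff_surjective _).2 J.mkQ_surjective
  let σ : P.complex.X 0 ⟶ ModuleCat.of R R := Projective.factorThru (pi0 P) q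
  have hσ : σ ≫ q = pi0 P := Projective.factorThru_comp _ _
  have hσ' : ∀ p, Ideal.Quotient.mk J (σ.hom p) = (pi0 P).hom p := fun p => by
    rw [← hσ]; rfl
  have hd : P.complex.d 1 0 ≫ pi0 P = 0 := P.complex_d_comp_π_f_zero
  refine ⟨P, σ, LinearMap.codRestrict J (P.complex.d 1 0 ≫ σ).hom ?_, hσ', fun p => rfl⟩
  intro p
  rw [← Ideal.Quotient.eq_zero_iff_mem]
  refine (hσ' _).trans ?_
  exact congrArg (fun t => t.hom p) hd

/-- The factor map `R/I → R/J`. -/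
def fac {I J : Ideal R} (h : I ≤ J) : ModuleCat.of R (R ⧸ I) ⟶ ModuleCat.of R (R ⧸ J) :=
  ModuleCat.ofHom <| Submodule.mapQ _ _ LinearMap.id h

lemma exists_class (J : Ideal R) : ∃ D : (J →ₗ[R] R) → E1 (ModuleCat.of R (R ⧸ J)) (ModuleCat.of R R) → Prop,
    (∀ φ, ∃ x, D φ x) ∧ (∀ φ φ' x x', D φ x → D φ' x' → D (φ + φ') (x + x')) ∧
    (∀ (a : R) φ x, D φ x → D (a • φ) (a • x)) ∧
    (∀ φ x (I : Ideal R) (h : I ≤ J), D φ x →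
      (((Ext R (ModuleCat.{0} R) 1).map (fac h).op).app (ModuleCat.of R R)).hom x = 0 →
      ∃ c : R, ∀ i (hi : i ∈ I), φ ⟨i, h hi⟩ = c * i) := by
  obtain ⟨P, σ, τ, hσ, hτ⟩ := exists_lift J
  refine ⟨fun φ x => Rep P (ModuleCat.ofHom (φ ∘ₗ τ)) x, ?_, ?_, ?_, ?_⟩
  · intro φ
    apply Rep.exists_of_cocycle
    ext p
    have : τ ((P.complex.d 2 1).hom p) = 0 := by
      ext
      rw [hτ]
      have := congrArg (fun t => σ.hom (t.hom p)) (P.complex.d_comp_d 2 1 0)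
      exact this.trans (map_zero σ.hom)
    simp [this]
  · intro φ φ' x x' h h'
    exact h.add P h'
  · intro a φ x h
    exact h.smul P a
  · intro φ x I h hx h0
    let Q := projectiveResolution (ModuleCat.of R (R ⧸ I))
    let g := ProjectiveResolution.lift (fac h) Q P
    have hg : g.f 0 ≫ pi0 P = pi0 Q ≫ fac h := ProjectiveResolution.lift_commutes_zero _ _ _
    have h1 := Rep.naturality P (fac h) g hg hx
    rw [h0] at h1
    obtain ⟨ψ, hψ⟩ := h1.coboundary
    have hepi : Epi (pi0 Q) := inferInstanceAs (Epi (Q.π.f 0))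
    obtain ⟨p0, hp0⟩ := (ModuleCat.epi_iff_surjective _).1 hepi (Ideal.Quotient.mk I 1)
    have hs0 : Ideal.Quotient.mk J (σ.hom ((g.f 0).hom p0)) = Ideal.Quotient.mk J 1 := by
      rw [hσ]
      have := congrArg (fun t => t.hom p0) hg
      refine this.trans ?_
      change (fac h).hom ((pi0 Q).hom p0) = _
      erw [hp0]
      rfl
    have hj0 : 1 - σ.hom ((g.f 0).hom p0) ∈ J := by
      rw [← Ideal.Quotient.eq_zero_iff_mem, map_sub, hs0, sub_self]
    refine ⟨ψ.hom p0 + φ ⟨_, hj0⟩, fun i hi => ?_⟩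
    have hex : ∃ p1, (Q.complex.d 1 0).hom p1 = i • p0 := by
      refine (ShortComplex.moduleCat_exact_iff _).1 Q.exact₀ (i • p0) ?_
      change (pi0 Q).hom (i • p0) = 0
      rw [map_smul]
      erw [hp0]
      change Ideal.Quotient.mk I (i • 1) = 0
      rw [Ideal.Quotient.eq_zero_iff_mem]
      simpa using hi
    obtain ⟨p1, hp1⟩ := hex
    have e1 : ψ.hom ((Q.complex.d 1 0).hom p1) = φ (τ ((g.f 1).hom p1)) :=
      congrArg (fun t => t.hom p1) hψ
    have e2 : (P.complex.d 1 0).hom ((g.f 1).hom p1) = (g.f 0).hom ((Q.complex.d 1 0).hom p1) :=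
      congrArg (fun t => t.hom p1) (g.comm 1 0)
    have e3 : τ ((g.f 1).hom p1) = ⟨i, h hi⟩ - i • ⟨_, hj0⟩ := by
      ext
      rw [hτ, e2, hp1, map_smul, map_smul]
      simp
      ring
    rw [e3, hp1, map_smul, map_sub, map_smul] at e1
    simp only [smul_eq_mul] at e1
    linear_combination -e1
/-- Vanishing in local cohomology. -/
lemma locCoh (J : Ideal R) (n : ℕ) (x : E1 (ModuleCat.of R (R ⧸ J ^ n)) (ModuleCat.of R R)) (a : R)
    (ha : a ∈ Module.annihilator R ((localCohomology J 1).obj (ModuleCat.of R R))) :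
    ∃ (m : ℕ) (h : n ≤ m), (((Ext R (ModuleCat.{0} R) 1).map (fac (Ideal.pow_le_pow_right h)).op).app
      (ModuleCat.of R R)).hom (a • x) = 0 := by
  let D := localCohomology.diagram (localCohomology.idealPowersDiagram J) 1
  let ev := (evaluation (ModuleCat.{0} R) (ModuleCat.{0} R)).obj (ModuleCat.of R R)
  let c := ev.mapCocone (colimit.cocone D)
  have hc : IsColimit c := isColimitOfPreserves ev (colimit.isColimit D)
  let i0 : (ℕᵒᵖ)ᵒᵖ := Opposite.op (Opposite.op n)
  let x' : (D ⋙ ev).obj i0 := x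
  have h1 : (c.ι.app i0).hom (a • x') = (c.ι.app i0).hom 0 := by
    rw [map_zero, map_smul]
    exact Module.mem_annihilator.1 ha _
  obtain ⟨k, f, g, hfg⟩ := Concrete.isColimit_exists_of_rep_eq (D ⋙ ev) (i := i0) (j := i0) hc _ _ h1
  refine ⟨k.unop.unop, leOfHom f.unop.unop, ?_⟩
  exact hfg.trans (map_zero ((D ⋙ ev).map g).hom)

lemma exists_phi (I : Ideal R) (f : FractionRing R)
    (h : ∀ i ∈ I, ∃ r : R, algebraMap R (FractionRing R) r = algebraMap R _ i * f) :
    ∃ φ : I →ₗ[R] R, ∀ i : I, algebraMap R (FractionRing R) (φ i) = algebraMap R _ (i : R) * f := by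
  choose g hg using h
  have inj := IsFractionRing.injective R (FractionRing R)
  refine ⟨{ toFun := fun i => g i i.2, map_add' := ?_, map_smul' := ?_ }, fun i => hg i i.2⟩
  · intro x y
    apply inj
    simp only [map_add, hg, Submodule.coe_add, add_mul]
  · intro a x
    apply inj
    simp only [map_mul, hg, smul_eq_mul, RingHom.id_apply, SetLike.val_smul, mul_assoc]

lemma buchs (J : Ideal R) (hqb : J ≤ Module.annihilator R ((localCohomology J 1).obj (ModuleCat.of R R)))
    (s : R) (hs : s ∈ J) (hs0 : s ∈ nonZeroDivisors R) (f : FractionRing R) (n : ℕ)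
    (h : ∀ i ∈ J ^ n, ∃ r : R, algebraMap R (FractionRing R) r = algebraMap R _ i * f)
    (a : R) (ha : a ∈ J) : ∃ r : R, algebraMap R (FractionRing R) r = algebraMap R _ a * f := by
  obtain ⟨φ, hφ⟩ := exists_phi _ f h
  obtain ⟨D, hD1, -, hD3, hD4⟩ := exists_class (J ^ n)
  obtain ⟨x, hx⟩ := hD1 φ
  obtain ⟨m, hm, h0⟩ := locCoh J n x a (hqb ha)
  obtain ⟨c, hc⟩ := hD4 _ _ _ _ (hD3 a _ _ hx) h0
  refine ⟨c, ?_⟩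
  have h1 := congrArg (algebraMap R (FractionRing R)) (hc (s ^ m) (Ideal.pow_mem_pow hs m))
  simp only [LinearMap.smul_apply, smul_eq_mul, map_mul, hφ] at h1
  have hu : IsUnit (algebraMap R (FractionRing R) (s ^ m)) :=
    IsLocalization.map_units _ (⟨s ^ m, pow_mem hs0 m⟩ : nonZeroDivisors R)
  apply hu.mul_right_cancel
  linear_combination -h1

lemma bass [IsLocalRing R]
    (hbass : ∃ e : E1 (ModuleCat.of R (R ⧸ maximalIdeal R)) (ModuleCat.of R R), Submodule.span R {e} = ⊤)
    (s : R) (hs : s ∈ maximalIdeal R) (hs0 : s ∈ nonZeroDivisors R) (f g : FractionRing R)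
    (hf : ∀ i ∈ maximalIdeal R, ∃ r : R, algebraMap R (FractionRing R) r = algebraMap R _ i * f)
    (hg : ∀ i ∈ maximalIdeal R, ∃ r : R, algebraMap R (FractionRing R) r = algebraMap R _ i * g)
    (hfn : ¬ ∃ r : R, algebraMap R (FractionRing R) r = f) :
    ∃ c r : R, g = algebraMap R _ c * f + algebraMap R _ r := by
  obtain ⟨e, he⟩ := hbass
  obtain ⟨φ, hφ⟩ := exists_phi _ f hf
  obtain ⟨γ, hγ⟩ := exists_phi _ g hg
  obtain ⟨D, hD1, hD2, hD3, hD4⟩ := exists_class (maximalIdeal R)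
  have hu : IsUnit (algebraMap R (FractionRing R) s) :=
    IsLocalization.map_units _ (⟨s, hs0⟩ : nonZeroDivisors R)
  have key : ∀ (φ : maximalIdeal R →ₗ[R] R) (f : FractionRing R),
      (∀ i, algebraMap R (FractionRing R) (φ i) = algebraMap R _ (i : R) * f) → D φ 0 →
      ∃ r : R, algebraMap R (FractionRing R) r = f := by
    intro φ f hφ h
    obtain ⟨c, hc⟩ := hD4 φ 0 _ le_rfl h (map_zero _)
    refine ⟨c, ?_⟩
    have h1 := congrArg (algebraMap R (FractionRing R)) (hc s hs)
    rw [hφ, map_mul] at h1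
    apply hu.mul_right_cancel
    linear_combination -h1
  obtain ⟨x, hx⟩ := hD1 φ
  obtain ⟨y, hy⟩ := hD1 γ
  obtain ⟨a, rfl⟩ := Submodule.mem_span_singleton.1 (he ▸ Submodule.mem_top : x ∈ Submodule.span R {e})
  obtain ⟨b, rfl⟩ := Submodule.mem_span_singleton.1 (he ▸ Submodule.mem_top : y ∈ Submodule.span R {e})
  have hau : IsUnit a := by
    by_contra hna
    have ham : a ∈ maximalIdeal R := hna
    have : a • e = 0 := smul_E1_eq_zero a (fun t => by
      obtain ⟨t, rfl⟩ := Ideal.Quotient.mk_surjective t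
      change Ideal.Quotient.mk _ (a * t) = 0
      rw [Ideal.Quotient.eq_zero_iff_mem]
      exact Ideal.mul_mem_right _ _ ham) e
    rw [this] at hx
    exact hfn (key φ f hφ hx)
  obtain ⟨a', ha'⟩ := hau.exists_left_inv
  have h := hD2 _ _ _ _ hy (hD3 (-(b * a')) _ _ hx)
  have h0 : b • e + (-(b * a')) • a • e = 0 := by
    rw [smul_smul, ← add_smul]
    have : b + -(b * a') * a = 0 := by linear_combination (-b) * ha'
    rw [this, zero_smul]
  rw [h0] at h
  obtain ⟨r, hr⟩ := key _ (g - algebraMap R _ (b * a') * f) (fun i => by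
    simp only [LinearMap.add_apply, LinearMap.smul_apply, map_add, smul_eq_mul, map_mul, hφ, hγ, map_neg]
    ring) h
  exact ⟨b * a', r, by rw [hr]; ring⟩

lemma exists_regular [IsLocalRing R] [IsNoetherianRing R]
    (hau : IsReduced (AdicCompletion (maximalIdeal R) R)) (hdim : ringKrullDim R = 2) :
    ∃ s ∈ maximalIdeal R, s ∈ nonZeroDivisors R := by
  have hinj : Function.Injective (algebraMap R (AdicCompletion (maximalIdeal R) R)) :=
    AdicCompletion.of_injective (maximalIdeal R) R
  have hred : IsReduced R := isReduced_of_injective _ hinj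
  by_contra! hcon
  have hlt := Ideal.bot_lt_annihilator_of_disjoint_nonZeroDivisors (I := maximalIdeal R)
    (Set.disjoint_left.2 hcon)
  obtain ⟨x, hx, hx0⟩ := Submodule.exists_mem_ne_zero_of_ne_bot hlt.ne'
  have hx' : ∀ t ∈ maximalIdeal R, x * t = 0 := fun t ht =>
    congrArg Subtype.val (Module.mem_annihilator.1 hx ⟨t, ht⟩)
  by_cases hxm : x ∈ maximalIdeal R
  · exact hx0 (hred.eq_zero x ⟨2, by rw [pow_two]; exact hx' x hxm⟩)
  · have hxu : IsUnit x := by_contra hxm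
    have hb : maximalIdeal R = ⊥ := by
      rw [eq_bot_iff]
      intro t ht
      simpa [hxu.mul_right_eq_zero] using hx' t ht
    have : IsField R := IsLocalRing.isField_iff_maximalIdeal_eq.2 hb
    rw [ringKrullDim_eq_zero_of_isField this] at hdim
    exact absurd hdim (by decide)

lemma dvd_total {A : Type} [CommRing A] [IsLocalRing A] [IsNoetherianRing A] (t : A)
    (ht : maximalIdeal A = Ideal.span {t}) (a b : A) : a ∣ b ∨ b ∣ a := by
  have key : ∀ a : A, a ≠ 0 → ∃ n : ℕ, ∃ u : A, IsUnit u ∧ a = u * t ^ n := by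
    intro a ha
    have hK := Ideal.iInf_pow_eq_bot_of_isLocalRing (maximalIdeal A) (maximalIdeal.isMaximal A).ne_top
    have hex : ∃ n, a ∉ maximalIdeal A ^ n := by
      by_contra! h
      apply ha
      have : a ∈ ⨅ i, maximalIdeal A ^ i := by simpa [Submodule.mem_iInf] using h
      rwa [hK] at this
    classical
    have h1 := Nat.find_spec hex
    rcases hn : Nat.find hex with _ | n
    · rw [hn] at h1; simp at h1
    · have h2 : a ∈ maximalIdeal A ^ n := by
        by_contra h
        have := Nat.find_min' hex h
        omega
      rw [hn] at h1
      rw [ht, Ideal.span_singleton_pow, Ideal.mem_span_singleton] at h2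
      obtain ⟨u, hu⟩ := h2
      refine ⟨n, u, ?_, by rw [hu, mul_comm]⟩
      by_contra hnu
      apply h1
      rw [hu, pow_succ]
      refine Ideal.mul_mem_mul (Ideal.pow_mem_pow ?_ n) hnu
      rw [ht]; exact Ideal.mem_span_singleton_self t
  by_cases ha : a = 0
  · right; rw [ha]; exact dvd_zero _
  by_cases hb : b = 0
  · left; rw [hb]; exact dvd_zero _
  obtain ⟨n, u, hu, rfl⟩ := key a ha
  obtain ⟨m, v, hv, rfl⟩ := key b hb
  rcases le_total n m with h | h
  · left
    rw [hu.mul_left_dvd]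
    exact (pow_dvd_pow t h).mul_left _
  · right
    rw [hv.mul_left_dvd]
    exact (pow_dvd_pow t h).mul_left _

lemma integral_clear {K : Type} [CommRing K] [Algebra R K] (f : K) (hf : IsIntegral R f) (u b : R)
    (h : algebraMap R K u = algebraMap R K b * f) :
    ∃ n : ℕ, ∃ r : R, algebraMap R K r = algebraMap R K (u ^ n) * f := by
  obtain ⟨p, hp, hpf⟩ := hf
  rcases hn : p.natDegree with _ | n
  · have : p = 1 := (Polynomial.Monic.natDegree_eq_zero hp).1 hn
    rw [this, Polynomial.eval₂_one] at hpf
    refine ⟨0, 0, ?_⟩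
    rw [← mul_one (algebraMap R K 0), hpf, mul_zero, ← mul_one (_ * f), hpf, mul_zero]
  · rw [Polynomial.Monic.as_sum hp, hn, Polynomial.eval₂_add, Polynomial.eval₂_finsetSum] at hpf
    simp only [Polynomial.eval₂_mul, Polynomial.eval₂_pow, Polynomial.eval₂_X, Polynomial.eval₂_C] at hpf
    refine ⟨n, -∑ i ∈ Finset.range (n + 1), p.coeff i * b ^ (n - i) * u ^ i, ?_⟩
    have h2 : algebraMap R K b ^ n * (f ^ (n + 1) + ∑ i ∈ Finset.range (n + 1),
      algebraMap R K (p.coeff i) * f ^ i) = 0 := by rw [hpf, mul_zero]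
    rw [mul_add, Finset.mul_sum] at h2
    rw [map_neg, map_sum, map_pow, h, neg_eq_iff_add_eq_zero, ← h2, add_comm]
    congr 1
    · ring
    · refine Finset.sum_congr rfl fun i hi => ?_
      have hi' : i ≤ n := by simpa [Nat.lt_succ_iff] using hi
      rw [map_mul, map_mul, map_pow, map_pow, h]
      conv_rhs => rw [← Nat.sub_add_cancel hi', pow_add]
      ring

lemma local_dvd (p : Ideal R) [p.IsPrime] (a b : R)
    (h : algebraMap R (Localization.AtPrime p) a ∣ algebraMap R (Localization.AtPrime p) b) :
    ∃ u c : R, u ∉ p ∧ u * b = c * a := by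
  obtain ⟨z, hz⟩ := h
  obtain ⟨⟨c, u⟩, hc⟩ := IsLocalization.surj p.primeCompl z
  have h1 : algebraMap R (Localization.AtPrime p) (u * b) = algebraMap R _ (c * a) := by
    rw [map_mul, map_mul, hz, ← hc]; ring
  obtain ⟨v, hv⟩ := (IsLocalization.eq_iff_exists p.primeCompl _).1 h1
  exact ⟨v * u, v * c, (v * u).2, by linear_combination hv⟩

lemma pow_conductor [IsLocalRing R] [IsNoetherianRing R] (hdim : ringKrullDim R = 2)
    (hR1 : ∀ (p : Ideal R) [p.IsPrime], ringKrullDim (Localization.AtPrime p) ≤ 1 →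
      ∃ t, maximalIdeal (Localization.AtPrime p) = Ideal.span {t})
    (f : FractionRing R) (hf : IsIntegral R f) :
    ∃ n : ℕ, ∀ i ∈ maximalIdeal R ^ n,
      ∃ r : R, algebraMap R (FractionRing R) r = algebraMap R _ i * f := by
  let I : Ideal R := (LinearMap.range (Algebra.linearMap R (FractionRing R))).comap
    (LinearMap.toSpanSingleton R _ f)
  have hI : ∀ i, i ∈ I ↔ ∃ r : R, algebraMap R (FractionRing R) r = algebraMap R _ i * f := by
    intro i
    simp [I, Algebra.smul_def]
  have hrad : maximalIdeal R ≤ I.radical := by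
    rw [Ideal.radical_eq_sInf]
    refine le_sInf fun p ⟨hIp, hp⟩ => ?_
    by_contra hle
    have hlt : p < maximalIdeal R := lt_of_le_not_ge (IsLocalRing.le_maximalIdeal hp.ne_top) hle
    have hh := Ideal.height_add_one_le_of_lt_of_isPrime hlt
    have hd : ringKrullDim (Localization.AtPrime p) ≤ 1 := by
      rw [IsLocalization.AtPrime.ringKrullDim_eq_height p]
      have h2 := IsLocalRing.maximalIdeal_height_eq_ringKrullDim (R := R)
      rw [hdim] at h2
      have h3 : (maximalIdeal R).height = 2 := WithBot.coe_injective h2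
      rw [h3] at hh
      have : p.height ≤ 1 := by
        have : p.height + 1 ≤ 1 + 1 := by simpa [one_add_one_eq_two] using hh
        exact (ENat.add_le_add_iff_right (by simp)).1 this
      exact_mod_cast this
    obtain ⟨t, ht⟩ := hR1 p hd
    obtain ⟨⟨a, s⟩, has⟩ := IsLocalization.surj (nonZeroDivisors R) f
    have hsu : IsUnit (algebraMap R (FractionRing R) s) := IsLocalization.map_units _ s
    rcases dvd_total t ht (algebraMap R _ (s : R)) (algebraMap R _ a) with h | h
    · obtain ⟨u, c, hu, hc⟩ := local_dvd p _ _ h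
      apply hu
      apply hIp
      rw [hI]
      refine ⟨c, ?_⟩
      have hc' := congrArg (algebraMap R (FractionRing R)) hc
      rw [map_mul, map_mul, ← has] at hc'
      apply hsu.mul_right_cancel
      linear_combination -hc'
    · obtain ⟨u, c, hu, hc⟩ := local_dvd p _ _ h
      have hc' := congrArg (algebraMap R (FractionRing R)) hc
      rw [map_mul, map_mul, ← has] at hc'
      obtain ⟨n, r, hr⟩ := integral_clear f hf u c (by
        apply hsu.mul_right_cancel
        linear_combination hc')
      exact hu (hp.mem_of_pow_mem n (hIp ((hI _).2 ⟨r, hr⟩)))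
  obtain ⟨n, hn⟩ := Ideal.exists_pow_le_of_le_radical_of_fg hrad (IsNoetherian.noetherian _)
  exact ⟨n, fun i hi => (hI i).1 (hn hi)⟩

lemma reflexive_of [IsLocalRing R] (S : Subalgebra R (FractionRing R))
    (hm : ∀ f ∈ S, ∀ i ∈ maximalIdeal R, ∃ r : R, algebraMap R (FractionRing R) r = algebraMap R _ i * f)
    (s : R) (hs : s ∈ maximalIdeal R) (hs0 : s ∈ nonZeroDivisors R)
    (f0 : FractionRing R) (hf0 : f0 ∈ S) (hf0n : ¬ ∃ r : R, algebraMap R (FractionRing R) r = f0)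
    (hS : ∀ g : FractionRing R,
      (∀ i ∈ maximalIdeal R, ∃ r : R, algebraMap R (FractionRing R) r = algebraMap R _ i * g) → g ∈ S) :
    Module.IsReflexive R S := by
  have inj := IsFractionRing.injective R (FractionRing R)
  have hu : IsUnit (algebraMap R (FractionRing R) s) :=
    IsLocalization.map_units _ (⟨s, hs0⟩ : nonZeroDivisors R)
  have hmu : ∀ i ∈ maximalIdeal R, ∃ μ : S →ₗ[R] R,
      ∀ y : S, algebraMap R (FractionRing R) (μ y) = algebraMap R _ i * (y : FractionRing R) := by
    intro i hi
    choose g hg using fun y : S => hm y y.2 i hi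
    refine ⟨{ toFun := g, map_add' := ?_, map_smul' := ?_ }, hg⟩
    · intro x y
      apply inj
      simp only [map_add, hg, Subalgebra.coe_add, mul_add]
    · intro a x
      apply inj
      rw [hg, RingHom.id_apply, smul_eq_mul, map_mul, hg,
        show ((a • x : S) : FractionRing R) = algebraMap R _ a * x from
          Algebra.smul_def a (x : FractionRing R)]
      ring
  choose μ hμ using hmu
  have hlam : ∀ (l : S →ₗ[R] R) (y : S), algebraMap R (FractionRing R) (l y) = algebraMap R _ (l 1) * y := by
    intro l y
    obtain ⟨r, hr⟩ := hm y y.2 s hs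
    have e : s • y = r • (1 : S) := by
      ext
      change s • (y : FractionRing R) = r • (1 : FractionRing R)
      rw [Algebra.smul_def, Algebra.smul_def, mul_one, hr]
    have e2 := congrArg (fun t => algebraMap R (FractionRing R) (l t)) e
    simp only [map_smul, smul_eq_mul, map_mul, hr] at e2
    apply hu.mul_left_cancel
    linear_combination e2
  have hl1 : ∀ l : S →ₗ[R] R, l 1 ∈ maximalIdeal R := by
    intro l
    by_contra hn
    have hlu : IsUnit (l 1) := by_contra hn
    obtain ⟨v, hv⟩ := hlu.exists_left_inv
    apply hf0n
    refine ⟨v * l ⟨f0, hf0⟩, ?_⟩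
    rw [map_mul, hlam, ← mul_assoc, ← map_mul, hv, map_one, one_mul]
  have hlmu : ∀ l : S →ₗ[R] R, l = μ (l 1) (hl1 l) := by
    intro l
    ext y
    apply inj
    rw [hlam, hμ]
  refine ⟨⟨?_, ?_⟩⟩
  · rw [← LinearMap.ker_eq_bot, LinearMap.ker_eq_bot']
    intro x hx
    have h1 : μ s hs x = 0 := LinearMap.congr_fun hx (μ s hs)
    have h2 := hμ s hs x
    rw [h1, map_zero] at h2
    ext
    exact hu.mul_right_eq_zero.1 h2.symm
  · intro Φ
    obtain ⟨w, hw⟩ := hu.exists_left_inv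
    let g : FractionRing R := w * algebraMap R _ (Φ (μ s hs))
    have hrg : ∀ i (hi : i ∈ maximalIdeal R), algebraMap R (FractionRing R) (Φ (μ i hi)) = algebraMap R _ i * g := by
      intro i hi
      have e : s • μ i hi = i • μ s hs := by
        ext y
        apply inj
        simp only [LinearMap.smul_apply, smul_eq_mul, map_mul, hμ]
        ring
      have e2 := congrArg (fun t => algebraMap R (FractionRing R) (Φ t)) e
      simp only [map_smul, smul_eq_mul, map_mul] at e2
      simp only [g]
      linear_combination w * e2 - algebraMap R (FractionRing R) (Φ (μ i hi)) * hw
    refine ⟨⟨g, hS g fun i hi => ⟨_, hrg i hi⟩⟩, ?_⟩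
    ext l
    apply inj
    rw [Module.Dual.eval_apply, hlam]
    conv_rhs => rw [hlmu l]
    rw [hrg]

end S7

-- STATEMENT 7
theorem stmt7 (R : Type) [CommRing R] [IsLocalRing R] [IsNoetherianRing R]
    (hau : AnalyticallyUnramified R) (hdim : ringKrullDim R = 2)
    (hR1 : SerreR1 R)
    (hqb : maximalIdeal R ≤ Module.annihilator R (localCohMod R 1 R))
    (hbass : ∃ e : ExtMod R (ResidueField R) R 1, Submodule.span R {e} = ⊤) :
    Module.IsReflexive R (IntClosure R) := by
  obtain ⟨s, hs, hs0⟩ := S7.exists_regular hau hdim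
  have hR1' : ∀ (p : Ideal R) [p.IsPrime], ringKrullDim (Localization.AtPrime p) ≤ 1 →
      ∃ t, maximalIdeal (Localization.AtPrime p) = Ideal.span {t} := by
    intro p _ h
    obtain ⟨-, S, hS, hc⟩ := hR1 p h
    rw [← hc] at h
    have h1 : S.card ≤ 1 := by
      have h' : ((S.card : ℕ∞) : WithBot ℕ∞) ≤ ((1 : ℕ∞) : WithBot ℕ∞) := h
      exact_mod_cast WithBot.coe_le_coe.1 h'
    rw [← hS]
    rcases Nat.le_one_iff_eq_zero_or_eq_one.1 h1 with h0 | h0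
    · rw [Finset.card_eq_zero] at h0
      refine ⟨0, ?_⟩
      rw [h0]; simp
    · obtain ⟨t, ht⟩ := Finset.card_eq_one.1 h0
      refine ⟨t, ?_⟩
      rw [ht]; simp
  have hm : ∀ f ∈ integralClosure R (FractionRing R), ∀ i ∈ maximalIdeal R,
      ∃ r : R, algebraMap R (FractionRing R) r = algebraMap R _ i * f := by
    intro f hf i hi
    obtain ⟨n, h⟩ := S7.pow_conductor hdim hR1' f hf
    exact S7.buchs (maximalIdeal R) hqb s hs hs0 f n h i hi
  by_cases hall : ∀ f ∈ integralClosure R (FractionRing R),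
      ∃ r : R, algebraMap R (FractionRing R) r = f
  · have hb : Function.Bijective (Algebra.linearMap R (IntClosure R)) := by
      constructor
      · intro a b hab
        exact IsFractionRing.injective R (FractionRing R) (congrArg Subtype.val hab)
      · rintro ⟨f, hf⟩
        obtain ⟨r, hr⟩ := hall f hf
        exact ⟨r, Subtype.ext hr⟩
    exact Module.equiv (LinearEquiv.ofBijective _ hb)
  · push Not at hall
    obtain ⟨f0, hf0, hn⟩ := hall
    have hn' : ¬ ∃ r : R, algebraMap R (FractionRing R) r = f0 := fun ⟨r, hr⟩ => hn r hr
    refine S7.reflexive_of _ hm s hs hs0 f0 hf0 hn' fun g hg => ?_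
    obtain ⟨c, r, hcr⟩ := S7.bass hbass s hs hs0 f0 g (hm f0 hf0) hg hn'
    rw [hcr]
    exact Subalgebra.add_mem _ (Subalgebra.mul_mem _ (Subalgebra.algebraMap_mem _ c) hf0)
      (Subalgebra.algebraMap_mem _ r)
end
end
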